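/- arXiv:1104.0915 — 2 statements merged into one kernel-verified Lean document; each statement's English description precedes it below -/
import Mathlib

section
/- Let α ∈ (1/2, 1), c > 0, and let (t_k) be a strictly increasing real sequence with t_{k+1} - t_k ≥ c·k^{α-1} for all k ≥ 1. Then there is a constant C̃ > 0 depending only on α and c such that for every (b_m) ∈ ℓ²(ℕ), Σ_{n=1}^∞ |Σ_{m≠n} m^{α-1} b_m/(t_m - t_n)|² ≤ C̃ · Σ_m |b_m|². -/
/-!
Sort the indices into dyadic blocks. On indices in the same or in neighbouring blocks the weight
`m ^ (α - 1)` and the gaps of `t` are both comparable to a constant depending on the block, so there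
the matrix is a bounded multiple of a Hilbert matrix `1 / (t m - t n)` with separated points, and
each index lies in only three enlarged blocks. For indices in distant blocks the gaps add up to
`|t m - t n| ≳ max m n ^ α`, so the entries are dominated by `(min / max) ^ r / √(n m)` with
`r = min (α - 1/2) (1/2) > 0`, and Schur's test with the weights `m ^ (-1/2)` applies.

For separated points, let `H` be the Hermitian matrix `i / (t m - t n)`. Partial fractions give
`H² = P + [D, H]` with `D` diagonal and `P` absolutely summable along its rows. The quadratic form
of `[D, H]` vanishes on eigenvectors of `H`, so every eigenvalue satisfies `μ² ≤ ‖P‖`.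
-/

section FiniteSections

open Finset Filter Topology

variable {ι 𝕜 : Type*} [RCLike 𝕜] {k l : ι → ι → 𝕜} {B B' : ℝ}

theorem card_filter_abs_sub_le_one_le (s : Finset ℤ) (a : ℤ) : #{j ∈ s | |a - j| ≤ 1} ≤ 3 := by
  have hsub : {j ∈ s | |a - j| ≤ 1} ⊆ Icc (a - 1) (a + 1) := fun j hj => by
    have := abs_le.1 (mem_filter.1 hj).2
    exact mem_Icc.2 ⟨by lia, by lia⟩
  refine (card_le_card hsub).trans ?_
  rw [Int.card_Icc]
  lia

theorem norm_sum_mul_sq_le_weighted {w : ι → ℝ} (hw : ∀ i, 0 < w i) (S : Finset ι)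
    (a x : ι → 𝕜) :
    ‖∑ m ∈ S, a m * x m‖ ^ 2 ≤
      (∑ m ∈ S, ‖a m‖ * w m) * ∑ m ∈ S, ‖a m‖ * (‖x m‖ ^ 2 / w m) := by
  calc ‖∑ m ∈ S, a m * x m‖ ^ 2 ≤ (∑ m ∈ S, ‖a m‖ * ‖x m‖) ^ 2 := by
        gcongr
        exact norm_sum_le_of_le _ fun m _ => (norm_mul _ _).le
    _ ≤ (∑ m ∈ S, ‖a m‖ * w m) * ∑ m ∈ S, ‖a m‖ * (‖x m‖ ^ 2 / w m) := by
        refine sum_sq_le_sum_mul_sum_of_sq_le_mul S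
          (fun m _ => by have := hw m; positivity) (fun m _ => by have := hw m; positivity)
          fun m _ => le_of_eq ?_
        have := (hw m).ne'
        field_simp

/-- The infinite matrix `k` (row index first) has squared operator norm at most `B` on `ℓ²(ι)`.
This is expressed through the finite square sections of `k`, so that no convergence of the row
sums is presupposed. -/
def HasSectionBound (k : ι → ι → 𝕜) (B : ℝ) : Prop :=
  ∀ (S : Finset ι) (x : ι → 𝕜),
    ∑ n ∈ S, ‖∑ m ∈ S, k n m * x m‖ ^ 2 ≤ B * ∑ m ∈ S, ‖x m‖ ^ 2

namespace HasSectionBound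

theorem add (hk : HasSectionBound k B) (hl : HasSectionBound l B') :
    HasSectionBound (k + l) (2 * (B + B')) := by
  intro S x
  calc ∑ n ∈ S, ‖∑ m ∈ S, (k + l) n m * x m‖ ^ 2
      ≤ ∑ n ∈ S, 2 * (‖∑ m ∈ S, k n m * x m‖ ^ 2 + ‖∑ m ∈ S, l n m * x m‖ ^ 2) := by
        refine sum_le_sum fun n _ => le_trans ?_ add_sq_le
        simp only [Pi.add_apply, add_mul, sum_add_distrib]
        gcongr
        exact norm_add_le _ _
    _ ≤ 2 * (B + B') * ∑ m ∈ S, ‖x m‖ ^ 2 := by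
        rw [← mul_sum, sum_add_distrib]
        linarith [hk S x, hl S x]

theorem mul_column_weight {v : ι → 𝕜} {V : ℝ} (hk : HasSectionBound k B) (hB : 0 ≤ B)
    (hv : ∀ m, ‖v m‖ ≤ V) : HasSectionBound (fun n m => k n m * v m) (B * V ^ 2) := by
  intro S x
  simp only [mul_assoc]
  refine (hk S fun m => v m * x m).trans ?_
  rw [mul_sum (a := V ^ 2)]
  gcongr with m _
  rw [norm_mul, mul_pow]
  gcongr
  exact hv m

theorem sum_norm_sq_row_le (hk : HasSectionBound k B) (n : ι) (S : Finset ι) :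
    ∑ m ∈ S, ‖k n m‖ ^ 2 ≤ B := by
  classical
  set s := ∑ m ∈ insert n S, ‖k n m‖ ^ 2 with hs
  have hSs : ∑ m ∈ S, ‖k n m‖ ^ 2 ≤ s :=
    sum_le_sum_of_subset_of_nonneg (subset_insert n S) fun _ _ _ => by positivity
  -- Testing on the conjugate of the row turns the `n`-th entry of the image into `s`.
  have hrow : ∑ m ∈ insert n S, k n m * star (k n m) = (s : 𝕜) := by
    simp [hs, RCLike.mul_conj]
  have hsq : s ^ 2 ≤ B * s := by
    have htest := (single_le_sum (fun n' _ => by positivity) (mem_insert_self n S)).trans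
      (hk (insert n S) fun m => star (k n m))
    simpa only [hrow, norm_star, RCLike.norm_ofReal, sq_abs, ← hs] using htest
  have hs0 : 0 ≤ s := by positivity
  have hB0 : 0 ≤ B := by
    have := hk {n} fun _ => 1
    simp only [sum_singleton, mul_one, norm_one, one_pow] at this
    exact (sq_nonneg _).trans this
  nlinarith

theorem summable_row (hk : HasSectionBound k B) {x : ι → 𝕜} (hx : Summable fun m => ‖x m‖ ^ 2)
    (n : ι) : Summable fun m => k n m * x m := by
  have hrow : Summable fun m => ‖k n m‖ ^ 2 :=
    summable_of_sum_le (fun _ => by positivity) (hk.sum_norm_sq_row_le n)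
  refine .of_norm_bounded (hrow.add hx) fun m => ?_
  rw [norm_mul]
  nlinarith [sq_nonneg (‖k n m‖ - ‖x m‖), sq_nonneg (‖k n m‖ + ‖x m‖)]

theorem sum_norm_tsum_sq_le (hk : HasSectionBound k B) {x : ι → 𝕜}
    (hx : Summable fun m => ‖x m‖ ^ 2) (F : Finset ι) :
    ∑ n ∈ F, ‖∑' m, k n m * x m‖ ^ 2 ≤ B * ∑' m, ‖x m‖ ^ 2 := by
  have hleft : Tendsto (fun S => ∑ n ∈ F, ‖∑ m ∈ S, k n m * x m‖ ^ 2) atTop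
      (𝓝 (∑ n ∈ F, ‖∑' m, k n m * x m‖ ^ 2)) :=
    tendsto_finsetSum F fun n _ => ((hk.summable_row hx n).hasSum.norm).pow 2
  refine le_of_tendsto_of_tendsto hleft (hx.hasSum.const_mul B) ?_
  filter_upwards [eventually_ge_atTop F] with S hFS
  exact (sum_le_sum_of_subset_of_nonneg hFS fun _ _ _ => by positivity).trans (hk S x)

theorem summable_norm_tsum_sq (hk : HasSectionBound k B) {x : ι → 𝕜}
    (hx : Summable fun m => ‖x m‖ ^ 2) : Summable fun n => ‖∑' m, k n m * x m‖ ^ 2 :=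
  summable_of_sum_le (fun _ => by positivity) (hk.sum_norm_tsum_sq_le hx)

theorem tsum_norm_tsum_sq_le (hk : HasSectionBound k B) {x : ι → 𝕜}
    (hx : Summable fun m => ‖x m‖ ^ 2) :
    ∑' n, ‖∑' m, k n m * x m‖ ^ 2 ≤ B * ∑' m, ‖x m‖ ^ 2 :=
  (hk.summable_norm_tsum_sq hx).tsum_le_of_sum_le (hk.sum_norm_tsum_sq_le hx)

theorem of_schur_test {w : ι → ℝ} {A : ℝ} (hw : ∀ i, 0 < w i)
    (hrow : ∀ (S : Finset ι) n, ∑ m ∈ S, ‖k n m‖ * w m ≤ A * w n)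
    (hcol : ∀ (S : Finset ι) m, ∑ n ∈ S, ‖k n m‖ * w n ≤ A * w m) :
    HasSectionBound k (A ^ 2) := by
  intro S x
  have hA : ∀ n, 0 ≤ A * w n := fun n => hrow ∅ n
  have hcauchy : ∀ n, ‖∑ m ∈ S, k n m * x m‖ ^ 2 ≤
      A * w n * ∑ m ∈ S, ‖k n m‖ * (‖x m‖ ^ 2 / w m) := by
    intro n
    refine (norm_sum_mul_sq_le_weighted hw S (k n) x).trans ?_
    refine mul_le_mul_of_nonneg_right (hrow S n) (sum_nonneg fun m _ => ?_)
    have := hw m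
    positivity
  calc ∑ n ∈ S, ‖∑ m ∈ S, k n m * x m‖ ^ 2
      ≤ ∑ n ∈ S, ∑ m ∈ S, A * (‖x m‖ ^ 2 / w m) * (‖k n m‖ * w n) := by
        refine sum_le_sum fun n _ => (hcauchy n).trans_eq ?_
        rw [mul_sum]
        exact sum_congr rfl fun m _ => by ring
    _ = ∑ m ∈ S, A * (‖x m‖ ^ 2 / w m) * ∑ n ∈ S, ‖k n m‖ * w n := by
        rw [sum_comm]
        simp only [mul_sum]
    _ ≤ ∑ m ∈ S, A * (‖x m‖ ^ 2 / w m) * (A * w m) := by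
        refine sum_le_sum fun m _ => mul_le_mul_of_nonneg_left (hcol S m) ?_
        have hA' : 0 ≤ A := nonneg_of_mul_nonneg_left (hA m) (hw m)
        have := hw m
        positivity
    _ = A ^ 2 * ∑ m ∈ S, ‖x m‖ ^ 2 := by
        rw [mul_sum]
        refine sum_congr rfl fun m _ => ?_
        have := (hw m).ne'
        field_simp

theorem of_overlapping_blocks {p : ι → ℤ} (hB : 0 ≤ B)
    (h : ∀ j, HasSectionBound (fun n m : {i // |p i - j| ≤ 1} => k n m) B) :
    HasSectionBound (fun n m => if |p m - p n| ≤ 1 then k n m else 0) (3 * B) := by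
  classical
  intro S x
  have hblock : ∀ j, ∑ n ∈ S with p n = j,
      ‖∑ m ∈ S, (if |p m - p n| ≤ 1 then k n m else 0) * x m‖ ^ 2
        ≤ B * ∑ m ∈ S with |p m - j| ≤ 1, ‖x m‖ ^ 2 := by
    intro j
    have hj : ∑ n ∈ S with |p n - j| ≤ 1, ‖∑ m ∈ S with |p m - j| ≤ 1, k n m * x m‖ ^ 2
        ≤ B * ∑ m ∈ S with |p m - j| ≤ 1, ‖x m‖ ^ 2 := by
      simpa only [← sum_subtype_eq_sum_filter] using h j (S.subtype _) fun m => x m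
    calc _ = ∑ n ∈ S with p n = j, ‖∑ m ∈ S with |p m - j| ≤ 1, k n m * x m‖ ^ 2 := by
          refine sum_congr rfl fun n hn => ?_
          simp only [(mem_filter.1 hn).2, ite_mul, zero_mul, sum_filter]
      _ ≤ ∑ n ∈ S with |p n - j| ≤ 1, ‖∑ m ∈ S with |p m - j| ≤ 1, k n m * x m‖ ^ 2 :=
          sum_le_sum_of_subset_of_nonneg
            (monotone_filter_right S fun n _ hn => by simp [hn]) fun _ _ _ => by positivity
      _ ≤ _ := hj
  calc ∑ n ∈ S, ‖∑ m ∈ S, (if |p m - p n| ≤ 1 then k n m else 0) * x m‖ ^ 2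
      = ∑ j ∈ S.image p, ∑ n ∈ S with p n = j,
          ‖∑ m ∈ S, (if |p m - p n| ≤ 1 then k n m else 0) * x m‖ ^ 2 :=
        (sum_fiberwise_of_maps_to (fun _ => mem_image_of_mem p) _).symm
    _ ≤ ∑ j ∈ S.image p, B * ∑ m ∈ S with |p m - j| ≤ 1, ‖x m‖ ^ 2 :=
        sum_le_sum fun j _ => hblock j
    _ = B * ∑ m ∈ S, #{j ∈ S.image p | |p m - j| ≤ 1} * ‖x m‖ ^ 2 := by
        simp only [← mul_sum, sum_filter, card_filter, Nat.cast_sum, sum_mul]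
        rw [sum_comm]
        simp
    _ ≤ B * ∑ m ∈ S, 3 * ‖x m‖ ^ 2 := by
        gcongr with m _
        exact_mod_cast card_filter_abs_sub_le_one_le _ (p m)
    _ = 3 * B * ∑ m ∈ S, ‖x m‖ ^ 2 := by rw [← mul_sum]; ring

end HasSectionBound

end FiniteSections

section HermitianMatrices

open Matrix
open scoped Matrix.Norms.L2Operator

variable {ι : Type*} [Fintype ι] {H M S : Matrix ι ι ℂ}

theorem star_dotProduct_commutator_mulVec_eq_zero (hH : H.IsHermitian) (S : Matrix ι ι ℂ)
    {x : ι → ℂ} {μ : ℝ} (hx : H *ᵥ x = μ • x) :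
    star x ⬝ᵥ (S * H - H * S) *ᵥ x = 0 := by
  have hstar : star x ᵥ* H = μ • star x := by
    rw [← hH.eq, ← star_mulVec, hx, star_smul, star_trivial]
  rw [sub_mulVec, ← mulVec_mulVec, ← mulVec_mulVec, hx, dotProduct_sub, dotProduct_mulVec _ H,
    hstar, mulVec_smul, dotProduct_smul, smul_dotProduct, sub_self]

variable [DecidableEq ι]

theorem sum_norm_sq_mulVec_le (A : Matrix ι ι ℂ) (x : ι → ℂ) :
    ∑ n, ‖(A *ᵥ x) n‖ ^ 2 ≤ ‖A‖ ^ 2 * ∑ m, ‖x m‖ ^ 2 := by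
  have h := pow_le_pow_left₀ (norm_nonneg _) (l2_opNorm_mulVec A (WithLp.toLp 2 x)) 2
  rwa [mul_pow, EuclideanSpace.norm_sq_eq, EuclideanSpace.norm_sq_eq] at h

theorem norm_star_dotProduct_mulVec_le (A : Matrix ι ι ℂ) {x : EuclideanSpace ℂ ι}
    (hx : ‖x‖ = 1) : ‖star x.ofLp ⬝ᵥ A *ᵥ x.ofLp‖ ≤ ‖A‖ := by
  have h := norm_inner_le_norm (𝕜 := ℂ) x (WithLp.toLp 2 (A *ᵥ x.ofLp))
  rw [EuclideanSpace.inner_eq_star_dotProduct, dotProduct_comm, hx, one_mul] at h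
  simpa [hx] using h.trans (l2_opNorm_mulVec A x)

theorem l2_opNorm_le_of_abs_eigenvalues_le (hH : H.IsHermitian) {C : ℝ} (hC : 0 ≤ C)
    (h : ∀ i, |hH.eigenvalues i| ≤ C) : ‖H‖ ≤ C := by
  rw [← cfc_id ℝ H hH]
  refine norm_cfc_le hC fun μ hμ => ?_
  obtain ⟨i, rfl⟩ := hH.spectrum_real_eq_range_eigenvalues ▸ hμ
  exact h i

theorem l2_opNorm_le_of_sum_norm_row_le (hM : M.IsHermitian) {C : ℝ} (hC : 0 ≤ C)
    (h : ∀ m, ∑ l, ‖M m l‖ ≤ C) : ‖M‖ ≤ C := by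
  refine l2_opNorm_le_of_abs_eigenvalues_le hM hC fun i => ?_
  have heigen : Module.End.HasEigenvalue (Matrix.toLin' M) (hM.eigenvalues i : ℂ) := by
    refine Module.End.hasEigenvalue_of_hasEigenvector (x := (hM.eigenvectorBasis i).ofLp)
      (Module.End.hasEigenvector_iff.2 ⟨Module.End.mem_eigenspace_iff.2 ?_, ?_⟩)
    · simpa using hM.mulVec_eigenvectorBasis i
    · simpa using hM.eigenvectorBasis.toBasis.ne_zero i
  obtain ⟨m, hm⟩ := eigenvalue_mem_ball heigen
  rw [mem_closedBall_iff_norm] at hm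
  calc |hM.eigenvalues i| = ‖(hM.eigenvalues i : ℂ)‖ := by simp
    _ ≤ ‖M m m‖ + ‖(hM.eigenvalues i : ℂ) - M m m‖ := norm_le_norm_add_norm_sub' _ _
    _ ≤ ‖M m m‖ + ∑ l ∈ Finset.univ.erase m, ‖M m l‖ := by gcongr
    _ = ∑ l, ‖M m l‖ := Finset.add_sum_erase _ (fun l => ‖M m l‖) (Finset.mem_univ m)
    _ ≤ C := h m

theorem l2_opNorm_sq_le_of_sq_eq_add_commutator (hH : H.IsHermitian)
    (h : H * H = M + (S * H - H * S)) : ‖H‖ ^ 2 ≤ ‖M‖ := by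
  refine (Real.le_sqrt (norm_nonneg _) (norm_nonneg _)).1 <|
    l2_opNorm_le_of_abs_eigenvalues_le hH (Real.sqrt_nonneg _) fun i => Real.abs_le_sqrt ?_
  set x := hH.eigenvectorBasis i
  set μ := hH.eigenvalues i
  have hx : H *ᵥ x.ofLp = μ • x.ofLp := hH.mulVec_eigenvectorBasis i
  have hunit : ‖x‖ = 1 := hH.eigenvectorBasis.norm_eq_one i
  have hxx : star x.ofLp ⬝ᵥ x.ofLp = 1 := by
    rw [dotProduct_comm, ← EuclideanSpace.inner_eq_star_dotProduct, inner_self_eq_norm_sq_to_K,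
      hunit]
    simp
  have hform : star x.ofLp ⬝ᵥ M *ᵥ x.ofLp = ((μ ^ 2 : ℝ) : ℂ) := by
    calc star x.ofLp ⬝ᵥ M *ᵥ x.ofLp = star x.ofLp ⬝ᵥ (H * H) *ᵥ x.ofLp := by
          rw [h, add_mulVec, dotProduct_add, star_dotProduct_commutator_mulVec_eq_zero hH S hx,
            add_zero]
      _ = ((μ ^ 2 : ℝ) : ℂ) := by
          rw [← mulVec_mulVec, hx, mulVec_smul, hx, dotProduct_smul, dotProduct_smul, hxx]
          simp [sq]
  have := norm_star_dotProduct_mulVec_le M hunit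
  rw [hform, Complex.norm_real, Real.norm_eq_abs] at this
  exact (le_abs_self _).trans this

end HermitianMatrices

section HilbertInequality

open Finset Matrix Real
open scoped Matrix.Norms.L2Operator

variable {ι : Type*}

/-- The matrix with entries `1 / (t m - t n)` of the Hilbert transform along the points `t`.
Since `0⁻¹ = 0`, its diagonal vanishes. -/
noncomputable def hilbertKernel (t : ι → ℝ) (n m : ι) : ℂ := ((t m - t n)⁻¹ : ℝ)

/-- The matrix `i / (t m - t n)`, the Hermitian multiple of `hilbertKernel t`. -/
noncomputable def hilbertMatrix (t : ι → ℝ) : Matrix ι ι ℂ :=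
  Matrix.of fun n m => Complex.I * hilbertKernel t n m

theorem hilbertMatrix_isHermitian (t : ι → ℝ) : (hilbertMatrix t).IsHermitian := by
  ext n m
  simp only [conjTranspose_apply, hilbertMatrix, of_apply, hilbertKernel, star_mul',
    RCLike.star_def, Complex.conj_I, Complex.conj_ofReal]
  rw [← neg_sub, inv_neg, Complex.ofReal_neg, neg_mul_neg]

variable {t : ι → ℝ}

theorem sum_inv_sub_mul_inv_sub [Fintype ι] (ht : Function.Injective t) {n l : ι} (hnl : n ≠ l) :
    ∑ m, (t n - t m)⁻¹ * (t l - t m)⁻¹ =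
      (t l - t n)⁻¹ * (∑ m, (t n - t m)⁻¹ - ∑ m, (t l - t m)⁻¹) + 2 * ((t l - t n)⁻¹) ^ 2 := by
  classical
  -- Partial fractions fail at `m = n` and `m = l`, where one factor is the junk value `0⁻¹ = 0`.
  have hpartial : ∀ m, (t n - t m)⁻¹ * (t l - t m)⁻¹ =
      (t l - t n)⁻¹ * ((t n - t m)⁻¹ - (t l - t m)⁻¹)
        + ((if m = n then ((t l - t n)⁻¹) ^ 2 else 0)
          + if m = l then ((t l - t n)⁻¹) ^ 2 else 0) := by
    intro m
    rcases eq_or_ne m n with rfl | hmn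
    · simp [hnl, sq]
    rcases eq_or_ne m l with rfl | hml
    · have : (t n - t m)⁻¹ = -(t m - t n)⁻¹ := by rw [← neg_sub, inv_neg]
      simp [hmn, this, sq]
    have hn : t n - t m ≠ 0 := sub_ne_zero.2 (ht.ne hmn.symm)
    have hl : t l - t m ≠ 0 := sub_ne_zero.2 (ht.ne hml.symm)
    have hln : t l - t n ≠ 0 := sub_ne_zero.2 (ht.ne hnl.symm)
    simp only [hmn, hml, if_false]
    field_simp
    ring
  simp only [hpartial, sum_add_distrib, ← mul_sum, sum_sub_distrib, sum_ite_eq', mem_univ, if_true]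
  ring

/-- The part of `hilbertMatrix t ^ 2` left over by the commutator in `hilbertMatrix_mul_self`: its
entries are squares of `1 / (t m - t n)`, hence absolutely summable along the rows. -/
noncomputable def hilbertSquarePart [Fintype ι] [DecidableEq ι] (t : ι → ℝ) : Matrix ι ι ℂ :=
  (Matrix.of fun n m => 2 * hilbertKernel t n m ^ 2)
    + diagonal fun n => ∑ m, hilbertKernel t n m ^ 2

theorem hilbertMatrix_mul_self [Fintype ι] [DecidableEq ι] (ht : Function.Injective t) :
    hilbertMatrix t * hilbertMatrix t = hilbertSquarePart t
      + (diagonal (fun n => Complex.I * ∑ m, hilbertKernel t n m) * hilbertMatrix t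
        - hilbertMatrix t * diagonal fun n => Complex.I * ∑ m, hilbertKernel t n m) := by
  have hneg : ∀ n m, hilbertKernel t n m = -((t n - t m)⁻¹ : ℝ) := fun n m => by
    rw [hilbertKernel, ← neg_sub, inv_neg, Complex.ofReal_neg]
  have hentry : ∀ n l, (hilbertMatrix t * hilbertMatrix t) n l =
      ((∑ m, (t n - t m)⁻¹ * (t l - t m)⁻¹ : ℝ) : ℂ) := by
    intro n l
    rw [mul_apply, Complex.ofReal_sum]
    refine sum_congr rfl fun m _ => ?_
    simp only [hilbertMatrix, of_apply]
    rw [mul_mul_mul_comm, Complex.I_mul_I, hneg n m, hilbertKernel]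
    push_cast
    ring
  ext n l
  rw [hentry]
  simp only [hilbertSquarePart, Matrix.add_apply, Matrix.sub_apply, diagonal_mul, mul_diagonal,
    of_apply, hilbertMatrix, hneg]
  rcases eq_or_ne n l with rfl | hnl
  · simp [sq]
  · rw [sum_inv_sub_mul_inv_sub ht hnl, diagonal_apply_ne _ hnl, ← neg_sub (t n) (t l), inv_neg]
    push_cast
    simp only [sum_neg_distrib]
    linear_combination (-(t n - t l : ℂ)⁻¹) *
      (∑ m, (t n - t m : ℂ)⁻¹ - ∑ m, (t l - t m : ℂ)⁻¹) * Complex.I_sq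

theorem hilbertSquarePart_isHermitian [Fintype ι] [DecidableEq ι] (t : ι → ℝ) :
    (hilbertSquarePart t).IsHermitian := by
  refine IsHermitian.add (Matrix.ext fun n m => ?_) (isHermitian_diagonal_of_self_adjoint _ ?_)
  · simp only [conjTranspose_apply, of_apply, hilbertKernel]
    rw [← neg_sub, inv_neg]
    simp
  · ext n
    simp [hilbertKernel]

theorem sum_norm_hilbertSquarePart_row_le [Fintype ι] [DecidableEq ι] (t : ι → ℝ) (n : ι) :
    ∑ m, ‖hilbertSquarePart t n m‖ ≤ 3 * ∑ m, ((t m - t n)⁻¹) ^ 2 := by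
  have hnorm : ∀ m, ‖hilbertKernel t n m ^ 2‖ = ((t m - t n)⁻¹) ^ 2 := fun m => by
    rw [hilbertKernel, norm_pow, Complex.norm_real, Real.norm_eq_abs, sq_abs]
  calc ∑ m, ‖hilbertSquarePart t n m‖
      ≤ ∑ m, (‖2 * hilbertKernel t n m ^ 2‖
          + ‖diagonal (fun n => ∑ m, hilbertKernel t n m ^ 2) n m‖) :=
        sum_le_sum fun m _ => norm_add_le _ _
    _ = 2 * ∑ m, ((t m - t n)⁻¹) ^ 2 + ‖∑ m, hilbertKernel t n m ^ 2‖ := by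
        simp only [sum_add_distrib, norm_mul, hnorm, ← mul_sum, diagonal_apply, apply_ite norm,
          norm_zero, sum_ite_eq, mem_univ, if_true, Complex.norm_ofNat]
    _ ≤ 2 * ∑ m, ((t m - t n)⁻¹) ^ 2 + ∑ m, ((t m - t n)⁻¹) ^ 2 := by
        gcongr
        exact norm_sum_le_of_le _ fun m _ => (hnorm m).le
    _ = 3 * ∑ m, ((t m - t n)⁻¹) ^ 2 := by ring

theorem sum_norm_sq_hilbertKernel_mul_le [Fintype ι] (ht : Function.Injective t) {D : ℝ}
    (hD0 : 0 ≤ D) (hD : ∀ n, ∑ m, ((t m - t n)⁻¹) ^ 2 ≤ D) (x : ι → ℂ) :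
    ∑ n, ‖∑ m, hilbertKernel t n m * x m‖ ^ 2 ≤ 3 * D * ∑ m, ‖x m‖ ^ 2 := by
  classical
  have hnorm : ‖hilbertMatrix t‖ ^ 2 ≤ 3 * D :=
    calc ‖hilbertMatrix t‖ ^ 2 ≤ ‖hilbertSquarePart t‖ :=
          l2_opNorm_sq_le_of_sq_eq_add_commutator (hilbertMatrix_isHermitian t)
            (hilbertMatrix_mul_self ht)
      _ ≤ 3 * D :=
          l2_opNorm_le_of_sum_norm_row_le (hilbertSquarePart_isHermitian t) (by positivity) fun n =>
            (sum_norm_hilbertSquarePart_row_le t n).trans (by gcongr; exact hD n)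
  calc ∑ n, ‖∑ m, hilbertKernel t n m * x m‖ ^ 2
      = ∑ n, ‖(hilbertMatrix t *ᵥ x) n‖ ^ 2 := by
        simp [hilbertMatrix, mulVec, dotProduct, mul_assoc, ← mul_sum]
    _ ≤ ‖hilbertMatrix t‖ ^ 2 * ∑ m, ‖x m‖ ^ 2 := sum_norm_sq_mulVec_le _ x
    _ ≤ 3 * D * ∑ m, ‖x m‖ ^ 2 := by gcongr

theorem hasSectionBound_hilbertKernel (ht : Function.Injective t) {D : ℝ} (hD0 : 0 ≤ D)
    (hD : ∀ (S : Finset ι) n, ∑ m ∈ S, ((t m - t n)⁻¹) ^ 2 ≤ D) :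
    HasSectionBound (hilbertKernel t) (3 * D) := by
  intro S x
  have hS : ∀ n : S, ∑ m : S, ((t m - t n)⁻¹) ^ 2 ≤ D := fun n =>
    (sum_coe_sort S fun m => ((t m - t n)⁻¹) ^ 2).trans_le (hD S n)
  have h := sum_norm_sq_hilbertKernel_mul_le (ht.comp Subtype.val_injective) hD0 hS fun m => x m
  rw [← sum_coe_sort S fun m => ‖x m‖ ^ 2, ← sum_coe_sort S fun n => ‖∑ m ∈ S, _‖ ^ 2]
  simp only [← sum_coe_sort S fun m => hilbertKernel t _ m * x m]
  exact h

theorem sum_inv_intCast_sq_le (S : Finset ℤ) : ∑ k ∈ S, ((k : ℝ)⁻¹) ^ 2 ≤ π ^ 2 / 3 := by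
  have hpos : HasSum (fun k : ℕ => ((k : ℝ)⁻¹) ^ 2) (π ^ 2 / 6) := by
    simpa using hasSum_zeta_two
  have hsum : HasSum (fun k : ℤ => ((k : ℝ)⁻¹) ^ 2) (π ^ 2 / 3) := by
    have h := HasSum.of_nat_of_neg (f := fun k : ℤ => ((k : ℝ)⁻¹) ^ 2) (by simpa using hpos)
      (by simpa [inv_neg, neg_sq] using hpos)
    have hval : π ^ 2 / 6 + π ^ 2 / 6 - ((0 : ℤ) : ℝ)⁻¹ ^ 2 = π ^ 2 / 3 := by norm_num; ring
    exact hval ▸ h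
  exact sum_le_hasSum S (fun _ _ => by positivity) hsum

theorem sum_inv_sub_sq_le_of_separated {q : ι → ℤ} (hq : Function.Injective q) {δ : ℝ}
    (hδ : 0 < δ) (hsep : ∀ n m, δ * |(q m - q n : ℝ)| ≤ |t m - t n|) (S : Finset ι) (n : ι) :
    ∑ m ∈ S, ((t m - t n)⁻¹) ^ 2 ≤ (π / δ) ^ 2 / 3 := by
  have hterm : ∀ m, ((t m - t n)⁻¹) ^ 2 ≤ (((q m - q n : ℤ) : ℝ)⁻¹) ^ 2 / δ ^ 2 := by
    intro m
    rcases eq_or_ne m n with rfl | hmn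
    · simp
    have hqmn : 0 < |(q m - q n : ℝ)| := abs_pos.2 (by exact_mod_cast sub_ne_zero.2 (hq.ne hmn))
    calc ((t m - t n)⁻¹) ^ 2 = (|t m - t n| ^ 2)⁻¹ := by rw [sq_abs, inv_pow]
      _ ≤ ((δ * |(q m - q n : ℝ)|) ^ 2)⁻¹ := by
          gcongr
          exact hsep n m
      _ = (((q m - q n : ℤ) : ℝ)⁻¹) ^ 2 / δ ^ 2 := by
          rw [mul_pow, sq_abs, mul_inv, Int.cast_sub, inv_pow, div_eq_inv_mul]
  have hinj : Function.Injective fun m => q m - q n := fun m m' h => hq (sub_left_injective h)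
  calc ∑ m ∈ S, ((t m - t n)⁻¹) ^ 2
      ≤ ∑ m ∈ S, (((q m - q n : ℤ) : ℝ)⁻¹) ^ 2 / δ ^ 2 := sum_le_sum fun m _ => hterm m
    _ = (∑ k ∈ S.map ⟨_, hinj⟩, ((k : ℝ)⁻¹) ^ 2) / δ ^ 2 := by rw [sum_div, sum_map]; rfl
    _ ≤ π ^ 2 / 3 / δ ^ 2 := by gcongr; exact sum_inv_intCast_sq_le _
    _ = (π / δ) ^ 2 / 3 := by ring

theorem hasSectionBound_hilbertKernel_of_separated {q : ι → ℤ} (hq : Function.Injective q) {δ : ℝ}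
    (hδ : 0 < δ) (hsep : ∀ n m, δ * |(q m - q n : ℝ)| ≤ |t m - t n|) :
    HasSectionBound (hilbertKernel t) ((π / δ) ^ 2) := by
  have ht : Function.Injective t := by
    intro n m hnm
    have h : δ * |(q m - q n : ℝ)| ≤ 0 := by simpa [hnm] using hsep n m
    have hqmn := abs_nonpos_iff.1 (nonpos_of_mul_nonpos_right h hδ)
    exact hq (by exact_mod_cast (sub_eq_zero.1 hqmn).symm)
  convert hasSectionBound_hilbertKernel ht (by positivity)
    (sum_inv_sub_sq_le_of_separated hq hδ hsep) using 1
  ring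

end HilbertInequality

section HardyKernel

open Finset Real

theorem sum_Ico_rpow_sub_one_le {ρ : ℝ} (hρ : ρ ≠ 0) (hρ1 : ρ ≤ 1) {a b : ℕ} (ha : 1 ≤ a)
    (hab : a ≤ b) :
    ∑ m ∈ Ico a b, ((m + 1 : ℕ) : ℝ) ^ (ρ - 1) ≤ ((b : ℝ) ^ ρ - (a : ℝ) ^ ρ) / ρ := by
  have ha0 : (0 : ℝ) < a := by exact_mod_cast ha
  have hanti : AntitoneOn (fun x : ℝ => x ^ (ρ - 1)) (Set.Icc (a : ℝ) b) := fun x hx y _ hxy =>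
    rpow_le_rpow_of_nonpos (ha0.trans_le hx.1) hxy (by linarith)
  have h0 : (0 : ℝ) ∉ Set.uIcc (a : ℝ) b := by
    rw [Set.uIcc_of_le (by exact_mod_cast hab)]
    exact fun h => ha0.not_ge h.1
  calc ∑ m ∈ Ico a b, ((m + 1 : ℕ) : ℝ) ^ (ρ - 1) ≤ ∫ x in (a : ℝ)..b, x ^ (ρ - 1) :=
        hanti.sum_le_integral_Ico hab
    _ = ((b : ℝ) ^ ρ - (a : ℝ) ^ ρ) / ρ := by
        rw [integral_rpow (.inr ⟨by contrapose! hρ; linarith, h0⟩), sub_add_cancel]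

theorem sum_range_rpow_sub_one_le {r : ℝ} (hr : 0 < r) (hr1 : r ≤ 1) (n : ℕ) :
    ∑ m ∈ range n, ((m + 1 : ℕ) : ℝ) ^ (r - 1) ≤ (n : ℝ) ^ r / r := by
  rcases n.eq_zero_or_pos with rfl | hn
  · simp [hr.ne']
  have h := sum_Ico_rpow_sub_one_le hr.ne' hr1 le_rfl hn
  rw [range_eq_Ico, sum_eq_sum_Ico_succ_bot hn]
  have hr1' : 1 ≤ 1 / r := by rwa [one_le_div hr]
  calc _ ≤ 1 + ((n : ℝ) ^ r - 1) / r := by simpa using h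
    _ ≤ (n : ℝ) ^ r / r := by rw [sub_div]; linarith

theorem sum_range_div_rpow_div_le {r : ℝ} (hr : 0 < r) (hr1 : r ≤ 1) (n : ℕ) :
    ∑ m ∈ range (n + 1), ((m + 1) / (n + 1) : ℝ) ^ r / (m + 1) ≤ 1 / r := by
  have hn : (0 : ℝ) < n + 1 := by positivity
  have hterm : ∀ m : ℕ, ((m + 1) / (n + 1) : ℝ) ^ r / (m + 1) =
      (n + 1 : ℝ) ^ (-r) * ((m + 1 : ℕ) : ℝ) ^ (r - 1) := by
    intro m
    have hm : (0 : ℝ) < m + 1 := by positivity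
    rw [div_rpow hm.le hn.le, rpow_neg hn.le, Nat.cast_succ, rpow_sub_one hm.ne']
    ring
  calc ∑ m ∈ range (n + 1), ((m + 1) / (n + 1) : ℝ) ^ r / (m + 1)
      = (n + 1 : ℝ) ^ (-r) * ∑ m ∈ range (n + 1), ((m + 1 : ℕ) : ℝ) ^ (r - 1) := by
        simp only [mul_sum, hterm]
    _ ≤ (n + 1 : ℝ) ^ (-r) * (((n + 1 : ℕ) : ℝ) ^ r / r) := by
        gcongr
        exact sum_range_rpow_sub_one_le hr hr1 _
    _ = 1 / r := by
        rw [Nat.cast_succ, rpow_neg hn.le]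
        field_simp

theorem sum_Ico_div_rpow_div_le {r : ℝ} (hr : 0 < r) {n K : ℕ} (hK : n + 1 ≤ K) :
    ∑ m ∈ Ico (n + 1) K, ((n + 1) / (m + 1) : ℝ) ^ r / (m + 1) ≤ 1 / r := by
  have hn : (0 : ℝ) < n + 1 := by positivity
  have hterm : ∀ m : ℕ, ((n + 1) / (m + 1) : ℝ) ^ r / (m + 1) =
      (n + 1 : ℝ) ^ r * ((m + 1 : ℕ) : ℝ) ^ (-r - 1) := by
    intro m
    have hm : (0 : ℝ) < m + 1 := by positivity
    rw [div_rpow hn.le hm.le, Nat.cast_succ, rpow_sub_one hm.ne', rpow_neg hm.le]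
    ring
  calc ∑ m ∈ Ico (n + 1) K, ((n + 1) / (m + 1) : ℝ) ^ r / (m + 1)
      = (n + 1 : ℝ) ^ r * ∑ m ∈ Ico (n + 1) K, ((m + 1 : ℕ) : ℝ) ^ (-r - 1) := by
        simp only [mul_sum, hterm]
    _ ≤ (n + 1 : ℝ) ^ r * (((K : ℝ) ^ (-r) - ((n + 1 : ℕ) : ℝ) ^ (-r)) / -r) := by
        gcongr
        exact sum_Ico_rpow_sub_one_le (neg_ne_zero.2 hr.ne') (by linarith) (by lia) hK
    _ = (n + 1 : ℝ) ^ r * ((n + 1 : ℝ) ^ (-r) - (K : ℝ) ^ (-r)) / r := by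
        rw [Nat.cast_succ]
        ring
    _ ≤ (n + 1 : ℝ) ^ r * (n + 1 : ℝ) ^ (-r) / r := by
        gcongr
        exact sub_le_self _ (by positivity)
    _ = 1 / r := by rw [rpow_neg hn.le, mul_inv_cancel₀ (by positivity)]

theorem sum_min_div_max_rpow_div_le {r : ℝ} (hr : 0 < r) (hr1 : r ≤ 1) (S : Finset ℕ) (n : ℕ) :
    ∑ m ∈ S, (min (n + 1 : ℝ) (m + 1) / max (n + 1 : ℝ) (m + 1)) ^ r / (m + 1) ≤ 2 / r := by
  obtain ⟨K, hSK⟩ := exists_nat_subset_range S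
  set N := max (n + 1) K
  calc ∑ m ∈ S, (min (n + 1 : ℝ) (m + 1) / max (n + 1 : ℝ) (m + 1)) ^ r / (m + 1)
      ≤ ∑ m ∈ range N, (min (n + 1 : ℝ) (m + 1) / max (n + 1 : ℝ) (m + 1)) ^ r / (m + 1) :=
        sum_le_sum_of_subset_of_nonneg
          (hSK.trans (range_mono (le_max_right _ _))) fun m _ _ => by positivity
    _ = ∑ m ∈ range (n + 1), ((m + 1) / (n + 1) : ℝ) ^ r / (m + 1)
          + ∑ m ∈ Ico (n + 1) N, ((n + 1) / (m + 1) : ℝ) ^ r / (m + 1) := by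
        rw [← sum_range_add_sum_Ico _ (le_max_left (n + 1) K)]
        congr 1 <;> refine sum_congr rfl fun m hm => ?_
        · have hmn : (m + 1 : ℝ) ≤ n + 1 := by exact_mod_cast mem_range.1 hm
          rw [min_eq_right hmn, max_eq_left hmn]
        · have hnm : (n + 1 : ℝ) ≤ m + 1 := by
            exact_mod_cast (mem_Ico.1 hm).1.trans (Nat.le_succ m)
          rw [min_eq_left hnm, max_eq_right hnm]
    _ ≤ 1 / r + 1 / r :=
        add_le_add (sum_range_div_rpow_div_le hr hr1 n)
          (sum_Ico_div_rpow_div_le hr (le_max_left _ _))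
    _ = 2 / r := by ring

theorem hasSectionBound_of_norm_le_min_div_max_rpow {𝕜 : Type*} [RCLike 𝕜] {k : ℕ → ℕ → 𝕜}
    {A r : ℝ} (hA : 0 ≤ A) (hr : 0 < r) (hr1 : r ≤ 1)
    (hk : ∀ n m, ‖k n m‖ ≤ A * (min (n + 1 : ℝ) (m + 1) / max (n + 1 : ℝ) (m + 1)) ^ r *
      ((n + 1 : ℝ) ^ (-1 / 2 : ℝ) * (m + 1 : ℝ) ^ (-1 / 2 : ℝ))) :
    HasSectionBound k ((A * (2 / r)) ^ 2) := by
  have hsq : ∀ m : ℕ, (m + 1 : ℝ) ^ (-1 / 2 : ℝ) * (m + 1 : ℝ) ^ (-1 / 2 : ℝ) = 1 / (m + 1) := by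
    intro m
    rw [← rpow_add (by positivity)]
    norm_num [rpow_neg_one]
  have hrow : ∀ (S : Finset ℕ) (n : ℕ) (a : ℕ → ℝ),
      (∀ m, a m ≤ A * (min (n + 1 : ℝ) (m + 1) / max (n + 1 : ℝ) (m + 1)) ^ r *
        ((n + 1 : ℝ) ^ (-1 / 2 : ℝ) * (m + 1 : ℝ) ^ (-1 / 2 : ℝ))) →
      ∑ m ∈ S, a m * (m + 1 : ℝ) ^ (-1 / 2 : ℝ) ≤ A * (2 / r) * (n + 1 : ℝ) ^ (-1 / 2 : ℝ) := by
    intro S n a ha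
    calc ∑ m ∈ S, a m * (m + 1 : ℝ) ^ (-1 / 2 : ℝ)
        ≤ ∑ m ∈ S, A * (n + 1 : ℝ) ^ (-1 / 2 : ℝ) *
            ((min (n + 1 : ℝ) (m + 1) / max (n + 1 : ℝ) (m + 1)) ^ r / (m + 1)) := by
          refine sum_le_sum fun m _ => ?_
          rw [div_eq_mul_one_div _ (m + 1 : ℝ), ← hsq]
          refine (mul_le_mul_of_nonneg_right (ha m) (by positivity)).trans_eq (by ring)
      _ ≤ A * (n + 1 : ℝ) ^ (-1 / 2 : ℝ) * (2 / r) := by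
          rw [← mul_sum]
          gcongr
          exact sum_min_div_max_rpow_div_le hr hr1 S n
      _ = A * (2 / r) * (n + 1 : ℝ) ^ (-1 / 2 : ℝ) := by ring
  refine .of_schur_test (w := fun m : ℕ => (m + 1 : ℝ) ^ (-1 / 2 : ℝ)) (fun m => by positivity)
    (fun S n => hrow S n _ (hk n)) fun S m => hrow S m _ fun n => (hk n m).trans_eq ?_
  rw [min_comm, max_comm, mul_comm ((n + 1 : ℝ) ^ (-1 / 2 : ℝ))]

theorem rpow_sub_one_mul_max_rpow_neg_le {α r x y : ℝ} (hx : 0 < x) (hy : 0 < y)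
    (hrα : r ≤ α - 1 / 2) (hr : r ≤ 1 / 2) :
    x ^ (α - 1) * max y x ^ (-α) ≤
      (min y x / max y x) ^ r * (y ^ (-1 / 2 : ℝ) * x ^ (-1 / 2 : ℝ)) := by
  rcases le_total x y with h | h
  · rw [max_eq_left h, min_eq_right h]
    calc x ^ (α - 1) * y ^ (-α)
        = (x / y) ^ (α - 1 / 2) * (y ^ (-1 / 2 : ℝ) * x ^ (-1 / 2 : ℝ)) := by
          simp only [rpow_def_of_pos hx, rpow_def_of_pos hy, rpow_def_of_pos (div_pos hx hy),
            log_div hx.ne' hy.ne', ← exp_add]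
          ring_nf
      _ ≤ (x / y) ^ r * (y ^ (-1 / 2 : ℝ) * x ^ (-1 / 2 : ℝ)) := by
          gcongr ?_ * _
          exact rpow_le_rpow_of_exponent_ge (by positivity) ((div_le_one hy).2 h) hrα
  · rw [max_eq_right h, min_eq_left h]
    calc x ^ (α - 1) * x ^ (-α)
        = (y / x) ^ (1 / 2 : ℝ) * (y ^ (-1 / 2 : ℝ) * x ^ (-1 / 2 : ℝ)) := by
          simp only [rpow_def_of_pos hx, rpow_def_of_pos hy, rpow_def_of_pos (div_pos hy hx),
            log_div hy.ne' hx.ne', ← exp_add]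
          ring_nf
      _ ≤ (y / x) ^ r * (y ^ (-1 / 2 : ℝ) * x ^ (-1 / 2 : ℝ)) := by
          gcongr ?_ * _
          exact rpow_le_rpow_of_exponent_ge (by positivity) ((div_le_one hx).2 h) hr

end HardyKernel

section GapSequences

open Finset Real

theorem mul_sub_le_sub_of_le_gap {T : ℕ → ℝ} {d : ℝ} {m n : ℕ} (hmn : m ≤ n)
    (h : ∀ k ∈ Ico m n, d ≤ T (k + 1) - T k) : d * (n - m) ≤ T n - T m := by
  rw [← sum_Ico_sub T hmn, mul_comm, ← Nat.cast_sub hmn, ← Nat.card_Ico, ← nsmul_eq_mul]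
  exact card_nsmul_le_sum _ _ _ h

theorem rpow_le_rpow_abs_mul_rpow {a x y : ℝ} (hx : 0 < x) (hy : 0 < y) (hxy : x ≤ a * y)
    (hyx : y ≤ a * x) (σ : ℝ) : x ^ σ ≤ a ^ |σ| * y ^ σ := by
  have hratio : (x / y) ^ σ ≤ a ^ |σ| := by
    rcases le_total 0 σ with hσ | hσ
    · rw [abs_of_nonneg hσ]
      exact rpow_le_rpow (by positivity) ((div_le_iff₀ hy).2 hxy) hσ
    · rw [abs_of_nonpos hσ, ← inv_div, inv_rpow (by positivity), ← rpow_neg (by positivity)]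
      exact rpow_le_rpow (by positivity) ((div_le_iff₀ hx).2 hyx) (neg_nonneg.2 hσ)
  calc x ^ σ = (x / y) ^ σ * y ^ σ := by
        rw [← mul_rpow (by positivity) hy.le, div_mul_cancel₀ _ hy.ne']
    _ ≤ a ^ |σ| * y ^ σ := by gcongr

/-- The dyadic block of the index `m`: the integer `j` with `2 ^ j ≤ m + 1 < 2 ^ (j + 1)`. -/
noncomputable def dyadicIndex (m : ℕ) : ℤ := Int.log 2 (m + 1 : ℝ)

theorem two_zpow_dyadicIndex_le (m : ℕ) : (2 : ℝ) ^ dyadicIndex m ≤ m + 1 :=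
  Int.zpow_log_le_self (b := 2) (by norm_num) (by positivity)

theorem lt_two_zpow_dyadicIndex_add_one (m : ℕ) : (m + 1 : ℝ) < 2 ^ (dyadicIndex m + 1) :=
  Int.lt_zpow_succ_log_self (b := 2) (by norm_num) _

theorem dyadicIndex_mono : Monotone dyadicIndex := fun m n hmn =>
  Int.log_mono_right (by positivity) (by gcongr)

theorem le_four_mul_two_zpow {m : ℕ} {j : ℤ} (hm : |dyadicIndex m - j| ≤ 1) :
    (m + 1 : ℝ) ≤ 4 * 2 ^ j := by
  calc (m + 1 : ℝ) ≤ 2 ^ (dyadicIndex m + 1) := (lt_two_zpow_dyadicIndex_add_one m).le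
    _ ≤ 2 ^ (2 + j) := zpow_le_zpow_right₀ one_le_two (by have := abs_le.1 hm; lia)
    _ = 4 * 2 ^ j := by rw [zpow_add₀ two_ne_zero]; norm_num

theorem two_zpow_le_four_mul {m : ℕ} {j : ℤ} (hm : |dyadicIndex m - j| ≤ 1) :
    (2 : ℝ) ^ j ≤ 4 * (m + 1) := by
  calc (2 : ℝ) ^ j ≤ 2 ^ (2 + dyadicIndex m) :=
        zpow_le_zpow_right₀ one_le_two (by have := abs_le.1 hm; lia)
    _ = 4 * 2 ^ dyadicIndex m := by rw [zpow_add₀ two_ne_zero]; norm_num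
    _ ≤ 4 * (m + 1) := by gcongr; exact two_zpow_dyadicIndex_le m

theorem two_mul_succ_le_succ_of_dyadicIndex {m n : ℕ} (h : dyadicIndex m + 2 ≤ dyadicIndex n) :
    2 * (m + 1) ≤ n + 1 := by
  have : (2 * (m + 1) : ℝ) ≤ n + 1 :=
    calc (2 * (m + 1) : ℝ) ≤ 2 * 2 ^ (dyadicIndex m + 1) := by
          gcongr
          exact (lt_two_zpow_dyadicIndex_add_one m).le
      _ = 2 ^ (dyadicIndex m + 2) := by
          rw [zpow_add₀ two_ne_zero, zpow_add₀ two_ne_zero]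
          norm_num
          ring
      _ ≤ 2 ^ dyadicIndex n := zpow_le_zpow_right₀ one_le_two h
      _ ≤ n + 1 := two_zpow_dyadicIndex_le n
  exact_mod_cast this

variable {T : ℕ → ℝ} {c α : ℝ}

theorem mul_abs_sub_le_of_dyadicIndex_near (hc : 0 ≤ c)
    (hT : ∀ k : ℕ, c * (k + 1 : ℝ) ^ (α - 1) ≤ T (k + 1) - T k) {j : ℤ} {n m : ℕ}
    (hn : |dyadicIndex n - j| ≤ 1) (hm : |dyadicIndex m - j| ≤ 1) :
    c * ((2 ^ j : ℝ) ^ (α - 1) / 4 ^ |α - 1|) * |(m - n : ℝ)| ≤ |T m - T n| := by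
  wlog hnm : n ≤ m generalizing n m
  · rw [abs_sub_comm (m : ℝ), abs_sub_comm (T m)]
    exact this hm hn (le_of_not_ge hnm)
  have hnm' : (0 : ℝ) ≤ m - n := sub_nonneg.2 (by exact_mod_cast hnm)
  rw [abs_of_nonneg hnm']
  refine (mul_sub_le_sub_of_le_gap hnm fun k hk => ?_).trans (le_abs_self _)
  have hnk := dyadicIndex_mono (mem_Ico.1 hk).1
  have hkm := dyadicIndex_mono (mem_Ico.1 hk).2.le
  have hkj : |dyadicIndex k - j| ≤ 1 := by
    rw [abs_le] at hn hm ⊢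
    exact ⟨by lia, by lia⟩
  refine le_trans ?_ (hT k)
  gcongr
  rw [div_le_iff₀' (by positivity)]
  exact rpow_le_rpow_abs_mul_rpow (by positivity) (by positivity) (two_zpow_le_four_mul hkj)
    (le_four_mul_two_zpow hkj) _

theorem hasSectionBound_dyadic_block (hc : 0 < c)
    (hT : ∀ k : ℕ, c * (k + 1 : ℝ) ^ (α - 1) ≤ T (k + 1) - T k) (j : ℤ) :
    HasSectionBound (fun n m : {i // |dyadicIndex i - j| ≤ 1} =>
      hilbertKernel T n m * ((m + 1 : ℝ) ^ (α - 1) : ℝ)) ((π * (4 ^ |α - 1|) ^ 2 / c) ^ 2) := by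
  set A : ℝ := 4 ^ |α - 1|
  set V : ℝ := (2 ^ j : ℝ) ^ (α - 1)
  have hA : 0 < A := by positivity
  have hV : 0 < V := by positivity
  have hhilbert : HasSectionBound (hilbertKernel fun i : {i // |dyadicIndex i - j| ≤ 1} => T i)
      ((π / (c * (V / A))) ^ 2) := by
    refine hasSectionBound_hilbertKernel_of_separated
      (ι := {i // |dyadicIndex i - j| ≤ 1}) (q := fun i => ((i : ℕ) : ℤ))
      (Nat.cast_injective.comp Subtype.val_injective) (by positivity) fun n m => ?_
    exact_mod_cast mul_abs_sub_le_of_dyadicIndex_near hc.le hT n.2 m.2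
  have hweight : ∀ m : {i // |dyadicIndex i - j| ≤ 1},
      ‖(((m + 1 : ℝ) ^ (α - 1) : ℝ) : ℂ)‖ ≤ A * V := fun m => by
    rw [Complex.norm_real, norm_of_nonneg (by positivity)]
    exact rpow_le_rpow_abs_mul_rpow (by positivity) (by positivity) (le_four_mul_two_zpow m.2)
      (two_zpow_le_four_mul m.2) _
  have hconst : (π / (c * (V / A))) ^ 2 * (A * V) ^ 2 = (π * A ^ 2 / c) ^ 2 := by field_simp
  exact hconst ▸ hhilbert.mul_column_weight (by positivity) hweight

theorem mul_rpow_le_sub_of_two_mul_succ_le (hc : 0 ≤ c)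
    (hT : ∀ k : ℕ, c * (k + 1 : ℝ) ^ (α - 1) ≤ T (k + 1) - T k) {m n : ℕ}
    (hmn : 2 * (m + 1) ≤ n + 1) : c / (4 * 2 ^ |α - 1|) * (n + 1 : ℝ) ^ α ≤ T n - T m := by
  have hmono : Monotone T := monotone_nat_of_le_succ fun k =>
    sub_nonneg.1 ((by positivity : 0 ≤ c * (k + 1 : ℝ) ^ (α - 1)).trans (hT k))
  have hgap : ∀ k ∈ Ico (n / 2) n, c * ((n + 1 : ℝ) ^ (α - 1) / 2 ^ |α - 1|) ≤ T (k + 1) - T k := by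
    intro k hk
    obtain ⟨hnk, hkn⟩ := mem_Ico.1 hk
    refine le_trans ?_ (hT k)
    gcongr
    rw [div_le_iff₀' (by positivity)]
    refine rpow_le_rpow_abs_mul_rpow (by positivity) (by positivity) ?_ ?_ _
    · exact_mod_cast (by lia : n + 1 ≤ 2 * (k + 1))
    · exact_mod_cast (by lia : k + 1 ≤ 2 * (n + 1))
  have hcount : (n + 1 : ℝ) / 4 ≤ n - (n / 2 : ℕ) := by
    have : (n + 1 + 4 * (n / 2 : ℕ) : ℝ) ≤ 4 * n := by
      exact_mod_cast (by lia : n + 1 + 4 * (n / 2) ≤ 4 * n)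
    linarith
  calc c / (4 * 2 ^ |α - 1|) * (n + 1 : ℝ) ^ α
      = c * ((n + 1 : ℝ) ^ (α - 1) / 2 ^ |α - 1|) * ((n + 1) / 4) := by
        rw [rpow_sub_one (by positivity)]
        field_simp
    _ ≤ c * ((n + 1 : ℝ) ^ (α - 1) / 2 ^ |α - 1|) * (n - (n / 2 : ℕ)) := by gcongr
    _ ≤ T n - T (n / 2) := mul_sub_le_sub_of_le_gap (Nat.div_le_self n 2) hgap
    _ ≤ T n - T m := sub_le_sub_left (hmono (by lia)) _

theorem norm_hilbertKernel_le_of_dyadicIndex_far (hc : 0 < c)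
    (hT : ∀ k : ℕ, c * (k + 1 : ℝ) ^ (α - 1) ≤ T (k + 1) - T k) {n m : ℕ}
    (hnm : ¬|dyadicIndex m - dyadicIndex n| ≤ 1) :
    ‖hilbertKernel T n m‖ ≤ 4 * 2 ^ |α - 1| / c * max (n + 1 : ℝ) (m + 1) ^ (-α) := by
  have hgap : c / (4 * 2 ^ |α - 1|) * max (n + 1 : ℝ) (m + 1) ^ α ≤ |T m - T n| := by
    wlog h : n ≤ m generalizing n m
    · rw [abs_sub_comm (T m), max_comm]
      exact this (by rwa [abs_sub_comm]) (le_of_not_ge h)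
    rw [max_eq_right (by gcongr)]
    refine (mul_rpow_le_sub_of_two_mul_succ_le hc.le hT ?_).trans (le_abs_self _)
    refine two_mul_succ_le_succ_of_dyadicIndex ?_
    rw [abs_of_nonneg (sub_nonneg.2 (dyadicIndex_mono h))] at hnm
    lia
  calc ‖hilbertKernel T n m‖ = |T m - T n|⁻¹ := by
        rw [hilbertKernel, Complex.norm_real, norm_eq_abs, abs_inv]
    _ ≤ (c / (4 * 2 ^ |α - 1|) * max (n + 1 : ℝ) (m + 1) ^ α)⁻¹ := by gcongr
    _ = 4 * 2 ^ |α - 1| / c * max (n + 1 : ℝ) (m + 1) ^ (-α) := by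
        rw [mul_inv, inv_div, rpow_neg (by positivity)]

theorem hasSectionBound_hilbertKernel_mul_rpow (hα : 1 / 2 < α) (hc : 0 < c)
    (hT : ∀ k : ℕ, c * (k + 1 : ℝ) ^ (α - 1) ≤ T (k + 1) - T k) :
    HasSectionBound (fun n m => hilbertKernel T n m * ((m + 1 : ℝ) ^ (α - 1) : ℝ))
      (2 * (3 * (π * (4 ^ |α - 1|) ^ 2 / c) ^ 2
        + (4 * 2 ^ |α - 1| / c * (2 / min (α - 1 / 2) (1 / 2))) ^ 2)) := by
  set k : ℕ → ℕ → ℂ := fun n m => hilbertKernel T n m * ((m + 1 : ℝ) ^ (α - 1) : ℝ)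
  have hnear := HasSectionBound.of_overlapping_blocks (k := k) (by positivity)
    (hasSectionBound_dyadic_block hc hT)
  have hfar := hasSectionBound_of_norm_le_min_div_max_rpow
    (k := fun n m => if |dyadicIndex m - dyadicIndex n| ≤ 1 then 0 else k n m)
    (A := 4 * 2 ^ |α - 1| / c) (r := min (α - 1 / 2) (1 / 2))
    (by positivity) (lt_min (by linarith) (by norm_num))
    ((min_le_right _ _).trans (by norm_num)) fun n m => ?_
  · convert hnear.add hfar using 1
    ext n m
    simp only [Pi.add_apply]
    split_ifs <;> simp
  split_ifs with hnm
  · rw [norm_zero]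
    positivity
  calc ‖k n m‖ = ‖hilbertKernel T n m‖ * (m + 1 : ℝ) ^ (α - 1) := by
        rw [norm_mul, Complex.norm_real, norm_of_nonneg (by positivity)]
    _ ≤ 4 * 2 ^ |α - 1| / c * max (n + 1 : ℝ) (m + 1) ^ (-α) * (m + 1 : ℝ) ^ (α - 1) := by
        gcongr
        exact norm_hilbertKernel_le_of_dyadicIndex_far hc hT hnm
    _ = 4 * 2 ^ |α - 1| / c * ((m + 1 : ℝ) ^ (α - 1) * max (n + 1 : ℝ) (m + 1) ^ (-α)) := by ring
    _ ≤ 4 * 2 ^ |α - 1| / c * ((min (n + 1 : ℝ) (m + 1) / max (n + 1 : ℝ) (m + 1)) ^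
          min (α - 1 / 2) (1 / 2) * ((n + 1 : ℝ) ^ (-1 / 2 : ℝ) * (m + 1 : ℝ) ^ (-1 / 2 : ℝ))) := by
        refine mul_le_mul_of_nonneg_left ?_ (by positivity)
        exact rpow_sub_one_mul_max_rpow_neg_le (by positivity) (by positivity) (min_le_left _ _)
          (min_le_right _ _)
    _ = _ := by ring

end GapSequences

theorem stmt7_general (α c : ℝ) (hα : 1 / 2 < α) (hc : 0 < c) :
    ∃ C : ℝ, 0 < C ∧
      ∀ t : ℕ → ℝ, (∀ k : ℕ, 1 ≤ k → t (k + 1) - t k ≥ c * (k : ℝ) ^ (α - 1)) →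
        ∀ b : ℕ → ℂ, Summable (fun m => ‖b m‖ ^ 2) →
          (∀ n : ℕ, Summable fun m : {m : ℕ // m ≠ n} =>
            (((((m : ℕ) : ℝ) + 1) ^ (α - 1) : ℝ) : ℂ) * b m
              / ((t ((m : ℕ) + 1) : ℂ) - (t (n + 1) : ℂ))) ∧
          Summable (fun n : ℕ => ‖∑' m : {m : ℕ // m ≠ n},
            (((((m : ℕ) : ℝ) + 1) ^ (α - 1) : ℝ) : ℂ) * b m
              / ((t ((m : ℕ) + 1) : ℂ) - (t (n + 1) : ℂ))‖ ^ 2) ∧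
          ∑' n : ℕ, ‖∑' m : {m : ℕ // m ≠ n},
              (((((m : ℕ) : ℝ) + 1) ^ (α - 1) : ℝ) : ℂ) * b m
                / ((t ((m : ℕ) + 1) : ℂ) - (t (n + 1) : ℂ))‖ ^ 2
            ≤ C * ∑' m : ℕ, ‖b m‖ ^ 2 := by
  refine ⟨2 * (3 * (Real.pi * (4 ^ |α - 1|) ^ 2 / c) ^ 2
      + (4 * 2 ^ |α - 1| / c * (2 / min (α - 1 / 2) (1 / 2))) ^ 2),
    by positivity, fun t ht b hb => ?_⟩
  set k : ℕ → ℕ → ℂ := fun n m =>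
    hilbertKernel (fun i => t (i + 1)) n m * ((m + 1 : ℝ) ^ (α - 1) : ℝ) with hk
  have hbound := hasSectionBound_hilbertKernel_mul_rpow (T := fun i => t (i + 1)) hα hc fun i => by
    exact_mod_cast ht (i + 1) (Nat.le_add_left 1 i)
  have hterm : ∀ n m : ℕ, (((m + 1 : ℝ) ^ (α - 1) : ℝ) : ℂ) * b m / (t (m + 1) - t (n + 1)) =
      k n m * b m := fun n m => by
    simp only [hk, hilbertKernel, Complex.ofReal_inv, Complex.ofReal_sub]
    ring
  have htsum : ∀ n, ∑' m : {m // m ≠ n}, k n m * b m = ∑' m, k n m * b m := by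
    refine fun n => Subtype.val_injective.tsum_eq (f := fun m => k n m * b m) fun m hm => ?_
    refine ⟨⟨m, ?_⟩, rfl⟩
    rintro rfl
    simp [hk, hilbertKernel] at hm
  simp only [hterm, htsum]
  exact ⟨fun n => (hbound.summable_row hb n).subtype _, hbound.summable_norm_tsum_sq hb,
    hbound.tsum_norm_tsum_sq_le hb⟩

/-- weighted discrete Hilbert transform bound, `α ∈ (1/2,1)`.
If `t` is strictly increasing with `t_{k+1} - t_k ≥ c k^{α-1}` for `k ≥ 1`, then there is
`C̃ > 0` (depending only on α and c) with
`Σ_n |Σ_{m≠n} m^{α-1} b_m/(t_m - t_n)|² ≤ C̃ Σ_m |b_m|²` for every `b ∈ ℓ²`.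
(Sequences are indexed by positive integers; here index `k : ℕ` stands for `k+1`.) -/
theorem stmt7 (α c : ℝ) (hα : 1 / 2 < α) (hα1 : α < 1) (hc : 0 < c) :
    ∃ C : ℝ, 0 < C ∧
      ∀ t : ℕ → ℝ, StrictMono t →
        (∀ k : ℕ, 1 ≤ k → t (k + 1) - t k ≥ c * (k : ℝ) ^ (α - 1)) →
        ∀ b : ℕ → ℂ, Summable (fun m => ‖b m‖ ^ 2) →
          ∑' n : ℕ, ‖∑' m : {m : ℕ // m ≠ n},
              (((((m : ℕ) : ℝ) + 1) ^ (α - 1) : ℝ) : ℂ) * b m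
                / ((t ((m : ℕ) + 1) : ℂ) - (t (n + 1) : ℂ))‖ ^ 2
            ≤ C * ∑' m : ℕ, ‖b m‖ ^ 2 := by
  obtain ⟨C, hC, h⟩ := stmt7_general α c hα hc
  exact ⟨C, hC, fun t _ ht b hb => (h t ht b hb).2.2⟩
end

section
/- Let α > 1, c > 0, and let (t_k) be a strictly increasing real sequence with t_{k+1} - t_k ≥ c·k^{α-1} for all k ≥ 1. Then there is a constant C̃ > 0 depending only on α and c such that for every (b_m) ∈ ℓ²(ℕ), Σ_{n=1}^∞ |Σ_{m≠n} m^{α-1} b_m/(t_m - t_n)|² ≤ C̃ · Σ_m |b_m|². -/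
/-!
Conjugating by the square roots of the weights `w m = m ^ (α - 1)` turns the kernel
`w m / (t m - t n)` into the skew-adjoint kernel `√(w n) * √(w m) / (t m - t n)`. By partial
fractions the Gram matrix of the latter is a commutator with a diagonal matrix plus a remainder
with summable rows. A normal matrix attains its norm at an eigenvector, where the commutator's
quadratic form vanishes, so only the remainder counts (Montgomery and Vaughan).

The nodes satisfy `|t m - t n| ≥ κ * max (w m) (w n) * |m - n|`, which bounds the rows of the
remainder by `∑ 1 / k ^ 2`, and also bounds the difference of the two kernels by a multiple of the
Hardy-type kernel `1 / max n m`, to which Schur's test applies.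
-/

open Finset
open scoped InnerProductSpace Matrix.Norms.L2Operator

theorem star_apply_eq_smul_of_isStarNormal {𝕜 E : Type*} [RCLike 𝕜] [NormedAddCommGroup E]
    [InnerProductSpace 𝕜 E] [CompleteSpace E] {T : E →L[𝕜] E} [IsStarNormal T] {μ : 𝕜} {v : E}
    (hv : T v = μ • v) : star T v = star μ • v := by
  have hN : IsStarNormal (T - μ • 1) := by
    rw [isStarNormal_iff, commute_iff_eq]
    simp only [star_sub, star_smul, star_one, sub_mul, mul_sub, star_comm_self' T, smul_sub,
      smul_mul_assoc, mul_smul_comm, one_mul, mul_one, smul_comm μ (star μ) (1 : E →L[𝕜] E)]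
    abel
  have := (ContinuousLinearMap.IsStarNormal.adjoint_apply_eq_zero_iff hN v).2 (by simp [hv])
  rw [← ContinuousLinearMap.star_eq_adjoint, star_sub, star_smul, star_one] at this
  simpa [sub_eq_zero] using this

-- The commutator's quadratic form vanishes at an eigenvector of `T`, because `star T` shares it.
theorem norm_sq_le_of_star_mul_self_eq_add_commutator {E : Type*} [NormedAddCommGroup E]
    [InnerProductSpace ℂ E] [CompleteSpace E] {T R D : E →L[ℂ] E} [IsStarNormal T]
    (hT : IsCompactOperator T) (h : star T * T = R + (T * D - D * T)) : ‖T‖ ^ 2 ≤ ‖R‖ := by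
  rcases subsingleton_or_nontrivial (E →L[ℂ] E) with _ | _
  · simp [Subsingleton.elim T 0]
  obtain ⟨μ, hμ, hμT⟩ := spectrum.exists_nnnorm_eq_spectralRadius T
  replace hμT : ‖μ‖ = ‖T‖ := by
    rw [IsStarNormal.spectralRadius_eq_nnnorm, ENNReal.coe_inj] at hμT
    exact congrArg NNReal.toReal hμT
  rcases eq_or_ne μ 0 with rfl | hμ0
  · simp [← hμT]
  obtain ⟨v, hv⟩ := ((hT.hasEigenvalue_iff_mem_spectrum hμ0).2 hμ).exists_hasEigenvector
  have hTv : T v = μ • v := hv.apply_eq_smul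
  have hcomm : ⟪v, (T * D - D * T) v⟫_ℂ = 0 := by
    have : ⟪v, T (D v)⟫_ℂ = μ * ⟪v, D v⟫_ℂ := by
      rw [← ContinuousLinearMap.adjoint_inner_left, ← ContinuousLinearMap.star_eq_adjoint,
        star_apply_eq_smul_of_isStarNormal hTv, inner_smul_left]
      simp
    simp [this, hTv]
  have hR : (‖T v‖ : ℂ) ^ 2 = ⟪v, R v⟫_ℂ := by
    have := congrArg (fun A : E →L[ℂ] E => ⟪v, A v⟫_ℂ) h
    simp only [add_apply, inner_add_right, hcomm, add_zero] at this
    rw [← this, mul_apply_eq_comp, ContinuousLinearMap.star_eq_adjoint,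
      ContinuousLinearMap.adjoint_inner_right, inner_self_eq_norm_sq_to_K]
    simp
  have hv0 : 0 < ‖v‖ := norm_pos_iff.2 hv.2
  refine le_of_mul_le_mul_right ?_ (pow_pos hv0 2)
  calc ‖T‖ ^ 2 * ‖v‖ ^ 2 = ‖⟪v, R v⟫_ℂ‖ := by
        rw [← hR, hTv, norm_smul, hμT]; simp [mul_pow]
    _ ≤ ‖v‖ * (‖R‖ * ‖v‖) := (norm_inner_le_norm _ _).trans (by gcongr; exact R.le_opNorm v)
    _ = ‖R‖ * ‖v‖ ^ 2 := by ring

theorem l2_opNorm_sq_le_of_star_mul_self_eq_add_commutator {ι : Type*} [Fintype ι]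
    [DecidableEq ι] {T R D : Matrix ι ι ℂ} [IsStarNormal T]
    (h : star T * T = R + (T * D - D * T)) : ‖T‖ ^ 2 ≤ ‖R‖ := by
  let Φ : Matrix ι ι ℂ ≃⋆ₐ[ℂ] (EuclideanSpace ℂ ι →L[ℂ] EuclideanSpace ℂ ι) :=
    Matrix.toEuclideanCLM
  have hΦ : star (Φ T) * Φ T = Φ R + (Φ T * Φ D - Φ D * Φ T) := by
    simpa only [map_mul, map_star, map_add, map_sub] using congrArg Φ h
  have : IsStarNormal (Φ T) := IsStarNormal.map Φ T
  have hcpt : IsCompactOperator (Φ T) :=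
    isCompactOperator_of_locallyCompactSpace_dom (Φ T)
  rw [Matrix.cstar_norm_def T, Matrix.cstar_norm_def R]
  exact norm_sq_le_of_star_mul_self_eq_add_commutator hcpt hΦ

theorem l2_opNorm_le_of_schur {m n 𝕜 : Type*} [Fintype m] [Fintype n] [DecidableEq n] [RCLike 𝕜]
    {A : Matrix m n 𝕜} {p : n → ℝ} {q : m → ℝ} {a b : ℝ} (hp : ∀ j, 0 < p j) (ha : 0 ≤ a)
    (hrow : ∀ i, ∑ j, ‖A i j‖ * p j ≤ a * q i) (hcol : ∀ j, ∑ i, ‖A i j‖ * q i ≤ b * p j) :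
    ‖A‖ ≤ √(a * b) := by
  have hrow_sq (x : n → 𝕜) (i : m) :
      ‖∑ j, A i j * x j‖ ^ 2 ≤ a * q i * ∑ j, ‖A i j‖ * (‖x j‖ ^ 2 / p j) := by
    calc ‖∑ j, A i j * x j‖ ^ 2 ≤ (∑ j, ‖A i j‖ * ‖x j‖) ^ 2 := by
          gcongr
          exact (norm_sum_le _ _).trans_eq (by simp only [norm_mul])
      _ ≤ (∑ j, ‖A i j‖ * p j) * ∑ j, ‖A i j‖ * (‖x j‖ ^ 2 / p j) := by
          refine sum_sq_le_sum_mul_sum_of_sq_le_mul _ (fun j _ => ?_) (fun j _ => ?_)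
            fun j _ => le_of_eq ?_
          · have := hp j; positivity
          · have := hp j; positivity
          · have := (hp j).ne'; field_simp
      _ ≤ _ := by
          gcongr
          · exact sum_nonneg fun j _ => by have := hp j; positivity
          · exact hrow i
  rw [Matrix.l2_opNorm_def]
  refine ContinuousLinearMap.opNorm_le_bound _ (Real.sqrt_nonneg _) fun x => ?_
  rw [← Real.sqrt_sq (norm_nonneg x), ← Real.sqrt_mul' _ (sq_nonneg _)]
  refine Real.le_sqrt_of_sq_le ?_
  calc ‖WithLp.toLp 2 (A.mulVec x)‖ ^ 2 = ∑ i, ‖∑ j, A i j * x j‖ ^ 2 :=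
        EuclideanSpace.norm_sq_eq _
    _ ≤ ∑ i, a * q i * ∑ j, ‖A i j‖ * (‖x j‖ ^ 2 / p j) := sum_le_sum fun i _ => hrow_sq x i
    _ = ∑ j, a * (‖x j‖ ^ 2 / p j) * ∑ i, ‖A i j‖ * q i := by
        simp only [mul_sum]
        rw [sum_comm]
        exact sum_congr rfl fun _ _ => sum_congr rfl fun _ _ => by ring
    _ ≤ ∑ j, a * (‖x j‖ ^ 2 / p j) * (b * p j) := by
        gcongr with j
        · have := hp j; positivity
        · exact hcol j
    _ = a * b * ‖x‖ ^ 2 := by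
        rw [EuclideanSpace.norm_sq_eq, mul_sum]
        exact sum_congr rfl fun j _ => by have := (hp j).ne'; field_simp

section FiniteSections

variable {ι 𝕜 : Type*} [DecidableEq ι] [RCLike 𝕜] {A : Matrix ι ι 𝕜} {C : ℝ}

theorem sum_norm_sq_le_of_submatrix_norm_le {s : Finset ι}
    (hA : ‖A.submatrix ((↑) : s → ι) ((↑) : s → ι)‖ ≤ C) (x : ι → 𝕜) :
    ∑ i ∈ s, ‖∑ j ∈ s, A i j * x j‖ ^ 2 ≤ C ^ 2 * ∑ j ∈ s, ‖x j‖ ^ 2 := by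
  set y : EuclideanSpace 𝕜 s := WithLp.toLp 2 fun j => x j
  have h := (Matrix.l2_opNorm_mulVec (A.submatrix ((↑) : s → ι) ((↑) : s → ι)) y).trans
    (mul_le_mul_of_nonneg_right hA (norm_nonneg y))
  have h2 := pow_le_pow_left₀ (norm_nonneg _) h 2
  rw [mul_pow, EuclideanSpace.norm_sq_eq, EuclideanSpace.norm_sq_eq] at h2
  rw [← sum_coe_sort s, ← sum_coe_sort s]
  simp_rw [← sum_coe_sort s fun j => A _ j * x j]
  exact h2

theorem summable_norm_sq_row_of_submatrix_norm_le
    (hA : ∀ s : Finset ι, ‖A.submatrix ((↑) : s → ι) ((↑) : s → ι)‖ ≤ C) (i : ι) :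
    Summable fun j => ‖A i j‖ ^ 2 := by
  refine summable_of_sum_le (c := C ^ 2) (fun _ => by positivity) fun s => ?_
  set r := ∑ j ∈ insert i s, ‖A i j‖ ^ 2 with hr
  suffices r ≤ C ^ 2 from
    (sum_le_sum_of_subset_of_nonneg (subset_insert i s) fun _ _ _ => by positivity).trans this
  have hsq : r ^ 2 ≤ C ^ 2 * r := by
    calc r ^ 2 = ‖∑ j ∈ insert i s, A i j * star (A i j)‖ ^ 2 := by
          simp only [RCLike.star_def, RCLike.mul_conj]
          rw [hr, ← sq_abs, ← RCLike.norm_ofReal (K := 𝕜)]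
          push_cast
          rfl
      _ ≤ ∑ k ∈ insert i s, ‖∑ j ∈ insert i s, A k j * star (A i j)‖ ^ 2 :=
          single_le_sum (f := fun k => ‖∑ j ∈ insert i s, A k j * star (A i j)‖ ^ 2)
            (fun _ _ => by positivity) (mem_insert_self i s)
      _ ≤ C ^ 2 * ∑ j ∈ insert i s, ‖star (A i j)‖ ^ 2 :=
          sum_norm_sq_le_of_submatrix_norm_le (hA _) fun j => star (A i j)
      _ = C ^ 2 * r := by simp only [norm_star, hr]
  have hr0 : 0 ≤ r := sum_nonneg fun _ _ => by positivity
  nlinarith [sq_nonneg C, hr0]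

theorem tsum_norm_sq_le_of_submatrix_norm_le
    (hA : ∀ s : Finset ι, ‖A.submatrix ((↑) : s → ι) ((↑) : s → ι)‖ ≤ C) {x : ι → 𝕜}
    (hx : Summable fun j => ‖x j‖ ^ 2) :
    ∑' i, ‖∑' j, A i j * x j‖ ^ 2 ≤ C ^ 2 * ∑' j, ‖x j‖ ^ 2 := by
  have hrow (i : ι) : Summable fun j => A i j * x j := by
    refine .of_norm_bounded ((summable_norm_sq_row_of_submatrix_norm_le hA i).add hx) fun j => ?_
    rw [norm_mul]
    nlinarith [two_mul_le_add_sq ‖A i j‖ ‖x j‖, norm_nonneg (A i j), norm_nonneg (x j),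
      mul_nonneg (norm_nonneg (A i j)) (norm_nonneg (x j))]
  refine Real.tsum_le_of_sum_le (fun _ => by positivity) fun s => ?_
  have hlim : Filter.Tendsto (fun u => ∑ i ∈ s, ‖∑ j ∈ u, A i j * x j‖ ^ 2) Filter.atTop
      (nhds (∑ i ∈ s, ‖∑' j, A i j * x j‖ ^ 2)) :=
    tendsto_finsetSum _ fun i _ => ((hrow i).hasSum.norm).pow 2
  refine le_of_tendsto hlim ((Filter.eventually_ge_atTop s).mono fun u hsu => ?_)
  calc ∑ i ∈ s, ‖∑ j ∈ u, A i j * x j‖ ^ 2 ≤ ∑ i ∈ u, ‖∑ j ∈ u, A i j * x j‖ ^ 2 :=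
        sum_le_sum_of_subset_of_nonneg hsu fun _ _ _ => by positivity
    _ ≤ C ^ 2 * ∑ j ∈ u, ‖x j‖ ^ 2 := sum_norm_sq_le_of_submatrix_norm_le (hA u) x
    _ ≤ C ^ 2 * ∑' j, ‖x j‖ ^ 2 := by
        gcongr
        exact hx.sum_le_tsum _ fun _ _ => by positivity

end FiniteSections

theorem inv_sub_mul_inv_sub {K : Type*} [Field K] [DecidableEq K] {a b : K} (hab : a ≠ b) (x : K) :
    (a - x)⁻¹ * (b - x)⁻¹ = (b - a)⁻¹ * ((a - x)⁻¹ - (b - x)⁻¹) +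
      ((if x = a then 1 else 0) + (if x = b then 1 else 0)) * ((a - b) ^ 2)⁻¹ := by
  have hab' : b - a ≠ 0 := sub_ne_zero.2 hab.symm
  have hab'' : a - b ≠ 0 := sub_ne_zero.2 hab
  rcases eq_or_ne x a with rfl | hxa
  · simp only [sub_self, inv_zero, hab, if_true, if_false]
    field_simp
    ring
  rcases eq_or_ne x b with rfl | hxb
  · simp only [sub_self, inv_zero, hxa, if_true, if_false]
    field_simp
    ring
  have hax : a - x ≠ 0 := sub_ne_zero.2 hxa.symm
  have hbx : b - x ≠ 0 := sub_ne_zero.2 hxb.symm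
  simp only [hxa, hxb, if_false]
  field_simp
  ring

theorem sum_mul_div_sub_mul_mul_div_sub {ι K : Type*} [Fintype ι] [Field K] {t : ι → K}
    (ht : Function.Injective t) (s : ι → K) {m l : ι} (hml : m ≠ l) :
    ∑ n, s n * s m / (t m - t n) * (s n * s l / (t l - t n)) =
      s m * s l * (s m ^ 2 + s l ^ 2) / (t m - t l) ^ 2 + s m * s l / (t l - t m) *
        (∑ n, s n ^ 2 / (t n - t l) - ∑ n, s n ^ 2 / (t n - t m)) := by
  classical
  have hterm (n : ι) : s n * s m / (t m - t n) * (s n * s l / (t l - t n)) =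
      s m * s l / (t l - t m) * (s n ^ 2 / (t n - t l) - s n ^ 2 / (t n - t m)) +
        ((if n = m then s n ^ 2 else 0) + (if n = l then s n ^ 2 else 0)) *
          (s m * s l / (t m - t l) ^ 2) := by
    have := inv_sub_mul_inv_sub (ht.ne hml) (t n)
    simp only [ht.eq_iff] at this
    rw [← neg_sub (t l), ← neg_sub (t m) (t n)]
    simp only [div_eq_mul_inv, inv_neg]
    rw [← mul_boole, ← mul_boole (n = l)]
    linear_combination (s n ^ 2 * s m * s l) * this
  simp only [hterm, sum_add_distrib, ← mul_sum, ← sum_mul, sum_sub_distrib, sum_ite_eq', mem_univ,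
    if_true]
  ring

/-- The discrete Hilbert transform with nodes `t` and weights `w`, as a matrix; its diagonal
vanishes because `x / 0 = 0`. -/
noncomputable def discreteHilbert {ι : Type*} (w t : ι → ℝ) : Matrix ι ι ℂ :=
  .of fun n m => ((w m / (t m - t n) : ℝ) : ℂ)

/-- The skew-adjoint matrix similar to `discreteHilbert (s ^ 2) t` through the diagonal matrix
of `s`. -/
noncomputable def skewHilbert {ι : Type*} (s t : ι → ℝ) : Matrix ι ι ℂ :=
  .of fun n m => ((s n * s m / (t m - t n) : ℝ) : ℂ)

theorem star_skewHilbert {ι : Type*} (s t : ι → ℝ) : star (skewHilbert s t) = -skewHilbert s t := by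
  ext n m
  simp only [skewHilbert, Matrix.star_apply, Matrix.neg_apply, Matrix.of_apply, Complex.star_def,
    Complex.conj_ofReal]
  rw [← neg_sub (t m), div_neg, mul_comm (s m), Complex.ofReal_neg]

section SkewHilbert

variable {ι : Type*} [Fintype ι] [DecidableEq ι]

/-- The Gram matrix of `skewHilbert s t` up to a commutator with a diagonal matrix, see
`star_skewHilbert_mul_self`. -/
noncomputable def skewHilbertGram (s t : ι → ℝ) : Matrix ι ι ℂ :=
  .of (fun m l => ((s m * s l * (s m ^ 2 + s l ^ 2) / (t m - t l) ^ 2 : ℝ) : ℂ)) +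
    .diagonal fun m => ((∑ n, (s m * s n / (t m - t n)) ^ 2 : ℝ) : ℂ)

theorem star_skewHilbert_mul_self {s t : ι → ℝ} (ht : Function.Injective t) :
    star (skewHilbert s t) * skewHilbert s t = skewHilbertGram s t +
      (skewHilbert s t * .diagonal (fun m => ((∑ n, s n ^ 2 / (t n - t m) : ℝ) : ℂ)) -
        .diagonal (fun m => ((∑ n, s n ^ 2 / (t n - t m) : ℝ) : ℂ)) * skewHilbert s t) := by
  ext m l
  have hgram : (star (skewHilbert s t) * skewHilbert s t) m l =
      ((∑ n, s n * s m / (t m - t n) * (s n * s l / (t l - t n)) : ℝ) : ℂ) := by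
    simp [skewHilbert, Matrix.mul_apply]
  rw [hgram, Matrix.add_apply, Matrix.sub_apply, Matrix.mul_diagonal, Matrix.diagonal_mul,
    skewHilbertGram, Matrix.add_apply]
  rcases eq_or_ne m l with rfl | hml
  · simp only [Matrix.diagonal_apply_eq, sub_self, div_zero, mul_comm, add_zero, Matrix.of_apply,
      skewHilbert]
    simp [sq]
  · rw [sum_mul_div_sub_mul_mul_div_sub ht s hml, Matrix.diagonal_apply_ne _ hml]
    simp only [skewHilbert, Matrix.of_apply]
    push_cast
    ring

theorem sum_norm_skewHilbertGram_le (s t : ι → ℝ) (m : ι) :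
    ∑ l, ‖skewHilbertGram s t m l‖ ≤ ∑ l, (s m ^ 2 + s l ^ 2) ^ 2 / (t m - t l) ^ 2 := by
  have hentry (l : ι) : ‖skewHilbertGram s t m l‖ ≤
      |s m * s l| * (s m ^ 2 + s l ^ 2) / (t m - t l) ^ 2 +
        if m = l then ∑ n, (s m * s n / (t m - t n)) ^ 2 else 0 := by
    refine (norm_add_le _ _).trans (add_le_add (le_of_eq ?_) (le_of_eq ?_))
    · rw [Matrix.of_apply, Complex.norm_real, Real.norm_eq_abs, abs_div, abs_mul,
        abs_of_nonneg (add_nonneg (sq_nonneg (s m)) (sq_nonneg (s l))), abs_sq]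
    · rw [Matrix.diagonal_apply]
      split_ifs
      · rw [Complex.norm_real, Real.norm_of_nonneg (sum_nonneg fun _ _ => sq_nonneg _)]
      · exact norm_zero
  calc ∑ l, ‖skewHilbertGram s t m l‖
      ≤ ∑ l, (|s m * s l| * (s m ^ 2 + s l ^ 2) / (t m - t l) ^ 2 +
          (s m * s l / (t m - t l)) ^ 2) := by
        refine (sum_le_sum fun l _ => hentry l).trans_eq ?_
        simp only [sum_add_distrib, sum_ite_eq, mem_univ, if_true]
    _ ≤ _ := by
        refine sum_le_sum fun l _ => ?_
        rw [div_pow, ← add_div]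
        gcongr
        rw [← sq_abs (s m * s l), abs_mul, ← sq_abs (s m), ← sq_abs (s l)]
        have hamgm := two_mul_le_add_sq |s m| |s l|
        have hprod := mul_nonneg (abs_nonneg (s m)) (abs_nonneg (s l))
        nlinarith [hamgm, hprod]

theorem skewHilbertGram_comm (s t : ι → ℝ) (m l : ι) :
    skewHilbertGram s t m l = skewHilbertGram s t l m := by
  rcases eq_or_ne m l with rfl | hml
  · rfl
  · simp only [skewHilbertGram, Matrix.add_apply, Matrix.of_apply, Matrix.diagonal_apply_ne _ hml,
      Matrix.diagonal_apply_ne _ hml.symm, ← neg_sub (t l), neg_sq, mul_comm (s l),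
      add_comm (s l ^ 2)]

theorem l2_opNorm_skewHilbert_le {s t : ι → ℝ} (ht : Function.Injective t) {Q : ℝ} (hQ0 : 0 ≤ Q)
    (hQ : ∀ m, ∑ n, (s m ^ 2 + s n ^ 2) ^ 2 / (t m - t n) ^ 2 ≤ Q) :
    ‖skewHilbert s t‖ ≤ √Q := by
  have hrow (m : ι) : ∑ l, ‖skewHilbertGram s t m l‖ * 1 ≤ Q * 1 := by
    simpa only [mul_one] using (sum_norm_skewHilbertGram_le s t m).trans (hQ m)
  have hgram : ‖skewHilbertGram s t‖ ≤ Q := by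
    rw [← Real.sqrt_mul_self hQ0]
    refine l2_opNorm_le_of_schur (fun _ => one_pos) hQ0 hrow fun l => ?_
    simpa only [skewHilbertGram_comm s t _ l] using hrow l
  have : IsStarNormal (skewHilbert s t) :=
    skewAdjoint.isStarNormal_of_mem (star_skewHilbert s t)
  exact Real.le_sqrt_of_sq_le ((l2_opNorm_sq_le_of_star_mul_self_eq_add_commutator
    (star_skewHilbert_mul_self ht)).trans hgram)

end SkewHilbert

theorem sum_one_div_sub_sq_le (n : ℕ) (s : Finset ℕ) :
    ∑ m ∈ s, 1 / ((n : ℝ) - m) ^ 2 ≤ ∑' k : ℤ, 1 / (k : ℝ) ^ 2 := by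
  let e : ℕ ↪ ℤ := ⟨fun m => n - m, fun a b h => by simpa using h⟩
  have he (m : ℕ) : e m = (n : ℤ) - m := rfl
  calc ∑ m ∈ s, 1 / ((n : ℝ) - m) ^ 2 = ∑ k ∈ s.map e, 1 / (k : ℝ) ^ 2 := by simp [he]
    _ ≤ _ := (Real.summable_one_div_int_pow.2 one_lt_two).sum_le_tsum _ fun _ _ => by positivity

theorem one_div_sqrt_add_one_le {x : ℝ} (hx : 0 ≤ x) : 1 / √(x + 1) ≤ 2 * (√(x + 1) - √x) := by
  have hb : 0 < √(x + 1) := Real.sqrt_pos.2 (by positivity)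
  rw [div_le_iff₀ hb]
  nlinarith [Real.sq_sqrt hx, Real.sq_sqrt (by positivity : 0 ≤ x + 1),
    sq_nonneg (√(x + 1) - √x)]

theorem one_div_mul_sqrt_add_one_le {x : ℝ} (hx : 0 < x) :
    1 / (x + 1) * (1 / √(x + 1)) ≤ 2 * (1 / √x - 1 / √(x + 1)) := by
  have ha : 0 < √x := Real.sqrt_pos.2 hx
  have hb : 0 < √(x + 1) := Real.sqrt_pos.2 (by positivity)
  have hab : √x ≤ √(x + 1) := Real.sqrt_le_sqrt (by linarith)
  calc 1 / (x + 1) * (1 / √(x + 1)) ≤ 1 / (√x * √(x + 1)) * (1 / √(x + 1)) := by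
        gcongr
        nlinarith [ha, Real.sq_sqrt (by positivity : 0 ≤ x + 1)]
    _ ≤ 1 / (√x * √(x + 1)) * (2 * (√(x + 1) - √x)) := by
        gcongr
        exact one_div_sqrt_add_one_le hx.le
    _ = 2 * (1 / √x - 1 / √(x + 1)) := by field_simp

theorem sum_one_div_max_mul_one_div_sqrt_le (n : ℕ) (s : Finset ℕ) :
    ∑ m ∈ s, 1 / (max (n : ℝ) m + 1) * (1 / √(m + 1)) ≤ 4 * (1 / √(n + 1)) := by
  obtain ⟨N, hN⟩ := s.exists_nat_subset_range
  have hhead : ∑ m ∈ range (n + 1), 1 / (max (n : ℝ) m + 1) * (1 / √(m + 1)) ≤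
      2 * (1 / √(n + 1)) := by
    calc _ ≤ ∑ m ∈ range (n + 1), 1 / ((n : ℝ) + 1) * (2 * (√((m + 1 : ℕ) : ℝ) - √(m : ℝ))) := by
          refine sum_le_sum fun m _ => ?_
          push_cast
          gcongr
          · exact le_max_left _ _
          · exact one_div_sqrt_add_one_le m.cast_nonneg
      _ = 2 * (√(n + 1) / (n + 1)) := by
          rw [← mul_sum, ← mul_sum, sum_range_sub fun m : ℕ => √(m : ℝ)]
          simp [div_eq_inv_mul, mul_left_comm]
      _ = 2 * (1 / √(n + 1)) := by rw [Real.sqrt_div_self']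
  have htail : ∑ i ∈ range N, 1 / (max (n : ℝ) (n + 1 + i : ℕ) + 1) *
      (1 / √((n + 1 + i : ℕ) + 1)) ≤ 2 * (1 / √(n + 1)) := by
    calc _ ≤ ∑ i ∈ range N,
            2 * (1 / √((n + 1 + i : ℕ) : ℝ) - 1 / √((n + 1 + (i + 1) : ℕ) : ℝ)) := by
          refine sum_le_sum fun i _ => ?_
          rw [max_eq_right (by push_cast; linarith [(i.cast_nonneg : (0 : ℝ) ≤ i)]), ← add_assoc,
            Nat.cast_succ]
          exact one_div_mul_sqrt_add_one_le (by positivity)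
      _ = 2 * (1 / √((n + 1 : ℕ) : ℝ) - 1 / √((n + 1 + N : ℕ) : ℝ)) := by
          rw [← mul_sum, sum_range_sub' fun i : ℕ => 1 / √((n + 1 + i : ℕ) : ℝ)]
      _ ≤ 2 * (1 / √(n + 1)) := by
          push_cast
          gcongr
          exact sub_le_self _ (by positivity)
  calc _ ≤ ∑ m ∈ range (n + 1 + N), 1 / (max (n : ℝ) m + 1) * (1 / √(m + 1)) :=
        sum_le_sum_of_subset_of_nonneg
          (hN.trans (range_mono (Nat.le_add_left N (n + 1)))) fun _ _ _ => by positivity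
    _ ≤ 4 * (1 / √(n + 1)) := by
        rw [sum_range_add]
        linarith

section NatNodes

variable {w τ : ℕ → ℝ} {κ B : ℝ}

theorem sum_add_sq_div_sub_sq_le (hκ : 0 < κ) (hw : ∀ n, 0 < w n)
    (hgap : ∀ m n : ℕ, κ * max (w m) (w n) * |(m : ℝ) - n| ≤ |τ m - τ n|) (m : ℕ) (s : Finset ℕ) :
    ∑ n ∈ s, (w m + w n) ^ 2 / (τ m - τ n) ^ 2 ≤ (2 / κ) ^ 2 * ∑' k : ℤ, 1 / (k : ℝ) ^ 2 := by
  have hterm (n : ℕ) :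
      (w m + w n) ^ 2 / (τ m - τ n) ^ 2 ≤ (2 / κ) ^ 2 * (1 / ((m : ℝ) - n) ^ 2) := by
    rcases eq_or_ne m n with rfl | hmn
    · simp
    have hdist : 0 < |(m : ℝ) - n| := abs_pos.2 (sub_ne_zero.2 (Nat.cast_injective.ne hmn))
    have hmax : 0 < max (w m) (w n) := (hw m).trans_le (le_max_left _ _)
    calc (w m + w n) ^ 2 / (τ m - τ n) ^ 2 = (w m + w n) ^ 2 / |τ m - τ n| ^ 2 := by rw [sq_abs]
      _ ≤ (2 * max (w m) (w n)) ^ 2 / (κ * max (w m) (w n) * |(m : ℝ) - n|) ^ 2 := by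
          have := (hw m).le
          have := (hw n).le
          gcongr
          · linarith [le_max_left (w m) (w n), le_max_right (w m) (w n)]
          · exact hgap m n
      _ = (2 / κ) ^ 2 * (1 / ((m : ℝ) - n) ^ 2) := by
          rw [← sq_abs ((m : ℝ) - n)]
          field_simp
  calc _ ≤ ∑ n ∈ s, (2 / κ) ^ 2 * (1 / ((m : ℝ) - n) ^ 2) := sum_le_sum fun n _ => hterm n
    _ ≤ _ := by
        rw [← mul_sum]
        gcongr
        exact sum_one_div_sub_sq_le m s

theorem norm_discreteHilbert_sub_skewHilbert_le (hκ : 0 < κ) (hB : 0 ≤ B) (hw : ∀ n, 0 < w n)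
    (hgap : ∀ m n : ℕ, κ * max (w m) (w n) * |(m : ℝ) - n| ≤ |τ m - τ n|)
    (hreg : ∀ m n : ℕ,
      |w m - w n| ≤ B * max (w m) (w n) * (|(m : ℝ) - n| / (max (m : ℝ) n + 1))) (n m : ℕ) :
    ‖(discreteHilbert w τ - skewHilbert (fun k => √(w k)) τ) n m‖ ≤
      B / κ * (1 / (max (n : ℝ) m + 1)) := by
  rcases eq_or_ne n m with rfl | hnm
  · simp only [discreteHilbert, skewHilbert, Matrix.sub_apply, Matrix.of_apply, sub_self, div_zero,
      norm_zero]
    positivity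
  have hdist : 0 < |(m : ℝ) - n| := abs_pos.2 (sub_ne_zero.2 (Nat.cast_injective.ne hnm.symm))
  have hmax : 0 < max (w m) (w n) := (hw m).trans_le (le_max_left _ _)
  have hnum : |w m - √(w n) * √(w m)| ≤ |w m - w n| := by
    have hm := Real.sq_sqrt (hw m).le
    have hn := Real.sq_sqrt (hw n).le
    rw [show w m - √(w n) * √(w m) = √(w m) * (√(w m) - √(w n)) by linear_combination -hm,
      show w m - w n = (√(w m) + √(w n)) * (√(w m) - √(w n)) by linear_combination hn - hm,
      abs_mul, abs_mul]
    gcongr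
    exact le_add_of_nonneg_right (Real.sqrt_nonneg _)
  calc ‖(discreteHilbert w τ - skewHilbert (fun k => √(w k)) τ) n m‖
      = |w m - √(w n) * √(w m)| / |τ m - τ n| := by
        simp only [discreteHilbert, skewHilbert, Matrix.sub_apply, Matrix.of_apply]
        rw [← Complex.ofReal_sub, ← sub_div, Complex.norm_real, Real.norm_eq_abs, abs_div]
    _ ≤ B * max (w m) (w n) * (|(m : ℝ) - n| / (max (m : ℝ) n + 1)) /
          (κ * max (w m) (w n) * |(m : ℝ) - n|) := by
        gcongr
        · exact hnum.trans (hreg m n)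
        · exact hgap m n
    _ = B / κ * (1 / (max (n : ℝ) m + 1)) := by
        rw [max_comm (m : ℝ)]
        field_simp

theorem l2_opNorm_submatrix_discreteHilbert_le (hκ : 0 < κ) (hB : 0 ≤ B) (hw : ∀ n, 0 < w n)
    (hgap : ∀ m n : ℕ, κ * max (w m) (w n) * |(m : ℝ) - n| ≤ |τ m - τ n|)
    (hreg : ∀ m n : ℕ,
      |w m - w n| ≤ B * max (w m) (w n) * (|(m : ℝ) - n| / (max (m : ℝ) n + 1)))
    (s : Finset ℕ) :
    ‖(discreteHilbert w τ).submatrix ((↑) : s → ℕ) ((↑) : s → ℕ)‖ ≤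
      √((2 / κ) ^ 2 * ∑' k : ℤ, 1 / (k : ℝ) ^ 2) + B / κ * 4 := by
  set S := skewHilbert (fun k => √(w k)) τ
  set E := discreteHilbert w τ - S with hE
  have hτ : Function.Injective τ := fun m n h => by
    have hmax : 0 < κ * max (w m) (w n) := mul_pos hκ ((hw m).trans_le (le_max_left _ _))
    have := hgap m n
    rw [h, sub_self, abs_zero] at this
    exact_mod_cast sub_eq_zero.1 (abs_nonpos_iff.1 (nonpos_of_mul_nonpos_right this hmax))
  have hS : ‖S.submatrix ((↑) : s → ℕ) ((↑) : s → ℕ)‖ ≤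
      √((2 / κ) ^ 2 * ∑' k : ℤ, 1 / (k : ℝ) ^ 2) := by
    refine l2_opNorm_skewHilbert_le (s := fun k : s => √(w k)) (t := fun k : s => τ k)
      (hτ.comp Subtype.val_injective) (by positivity) fun m => ?_
    simp only [Real.sq_sqrt (hw _).le]
    rw [sum_coe_sort s fun n => (w m + w n) ^ 2 / (τ m - τ n) ^ 2]
    exact sum_add_sq_div_sub_sq_le hκ hw hgap m s
  have hrow (n : s) : ∑ m : s, B / κ * (1 / (max (n : ℝ) m + 1)) * (1 / √((m : ℝ) + 1)) ≤
      B / κ * 4 * (1 / √((n : ℝ) + 1)) := by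
    simp only [mul_assoc, ← mul_sum]
    rw [sum_coe_sort s fun m : ℕ => 1 / (max (n : ℝ) m + 1) * (1 / √((m : ℝ) + 1))]
    gcongr
    exact sum_one_div_max_mul_one_div_sqrt_le n s
  have hentry := norm_discreteHilbert_sub_skewHilbert_le hκ hB hw hgap hreg
  have hEnorm : ‖E.submatrix ((↑) : s → ℕ) ((↑) : s → ℕ)‖ ≤ B / κ * 4 := by
    rw [← Real.sqrt_mul_self (by positivity : 0 ≤ B / κ * 4)]
    refine l2_opNorm_le_of_schur (p := fun m : s => 1 / √((m : ℝ) + 1))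
      (q := fun n : s => 1 / √((n : ℝ) + 1)) (fun m => by positivity) (by positivity)
      (fun n => ?_) fun m => ?_
    · refine le_trans (sum_le_sum fun m _ => ?_) (hrow n)
      gcongr
      exact hentry n m
    · refine le_trans (sum_le_sum fun n _ => ?_) (hrow m)
      gcongr
      rw [max_comm]
      exact hentry n m
  calc _ = ‖(S + E).submatrix ((↑) : s → ℕ) ((↑) : s → ℕ)‖ := by
        rw [hE, add_sub_cancel]
    _ ≤ _ := (norm_add_le _ _).trans (add_le_add hS hEnorm)

end NatNodes

section PowerWeights

variable {p x y : ℝ}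

theorem rpow_sub_rpow_le (hx : 0 < x) (hxy : x ≤ y) :
    y ^ p - x ^ p ≤ max 1 p * y ^ p * ((y - x) / y) := by
  have hy : 0 < y := hx.trans_le hxy
  have hr0 : 0 < x / y := by positivity
  have hr1 : x / y ≤ 1 := (div_le_one hy).2 hxy
  have hratio : 1 - (x / y) ^ p ≤ max 1 p * (1 - x / y) := by
    rcases le_total p 1 with hp | hp
    · have := Real.rpow_le_rpow_of_exponent_ge hr0 hr1 hp
      rw [Real.rpow_one] at this
      rw [max_eq_left hp]
      linarith
    · have := one_add_mul_self_le_rpow_one_add (s := x / y - 1) (by linarith) hp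
      rw [add_sub_cancel] at this
      rw [max_eq_right hp]
      linarith
  calc y ^ p - x ^ p = y ^ p * (1 - (x / y) ^ p) := by
        rw [Real.div_rpow hx.le hy.le, mul_sub, mul_one, mul_div_cancel₀ _ (by positivity)]
    _ ≤ y ^ p * (max 1 p * (1 - x / y)) := by gcongr
    _ = max 1 p * y ^ p * ((y - x) / y) := by field_simp

theorem abs_rpow_sub_rpow_le (hp : 0 ≤ p) (hx : 0 < x) (hy : 0 < y) :
    |x ^ p - y ^ p| ≤ max 1 p * max (x ^ p) (y ^ p) * (|x - y| / max x y) := by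
  wlog hxy : x ≤ y generalizing x y
  · rw [abs_sub_comm, abs_sub_comm x, max_comm (x ^ p), max_comm x]
    exact this hy hx (le_of_not_ge hxy)
  have hpow : x ^ p ≤ y ^ p := Real.rpow_le_rpow hx.le hxy hp
  rw [max_eq_right hxy, max_eq_right hpow, abs_sub_comm, abs_sub_comm x,
    abs_of_nonneg (sub_nonneg.2 hxy), abs_of_nonneg (sub_nonneg.2 hpow)]
  exact rpow_sub_rpow_le hx hxy

theorem rpow_sub_one_mul_sub_le (hp : 1 ≤ p) (hx : 0 ≤ x) (hxy : x ≤ y) :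
    y ^ (p - 1) * (y - x) ≤ y ^ p - x ^ p := by
  have hsplit {z : ℝ} (hz : 0 ≤ z) : z ^ (p - 1) * z = z ^ p := by
    rw [← Real.rpow_add_one' hz (by linarith), sub_add_cancel]
  have : x ^ (p - 1) * x ≤ y ^ (p - 1) * x := by gcongr
  rw [mul_sub, hsplit (hx.trans hxy)]
  linarith [hsplit hx]

theorem add_one_rpow_sub_rpow_le (hp : 1 ≤ p) (hx : 1 ≤ x) :
    (x + 1) ^ p - x ^ p ≤ p * 2 ^ (p - 1) * x ^ (p - 1) := by
  have hx0 : 0 < x := one_pos.trans_le hx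
  calc (x + 1) ^ p - x ^ p ≤ p * (x + 1) ^ p * (1 / (x + 1)) := by
        simpa only [max_eq_right hp, add_sub_cancel_left] using
          rpow_sub_rpow_le (p := p) hx0 (le_add_of_nonneg_right zero_le_one)
    _ = p * (x + 1) ^ (p - 1) := by
        rw [Real.rpow_sub_one (by positivity)]
        ring
    _ ≤ p * (2 * x) ^ (p - 1) := by gcongr; linarith
    _ = p * 2 ^ (p - 1) * x ^ (p - 1) := by rw [Real.mul_rpow zero_le_two hx0.le, mul_assoc]

theorem mul_rpow_mul_sub_le_sub {c : ℝ} {τ : ℕ → ℝ} (hp : 1 ≤ p) (hc : 0 ≤ c)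
    (hstep : ∀ k : ℕ, c * ((k : ℝ) + 1) ^ (p - 1) ≤ τ (k + 1) - τ k) {m n : ℕ} (hmn : m ≤ n) :
    c / (p * 2 ^ (p - 1)) * ((n : ℝ) + 1) ^ (p - 1) * (n - m) ≤ τ n - τ m := by
  set κ := c / (p * 2 ^ (p - 1)) with hκ
  have hκ0 : 0 ≤ κ := by positivity
  have hmono : Monotone fun k : ℕ => τ k - κ * ((k : ℝ) + 1) ^ p := by
    refine monotone_nat_of_le_succ fun k => ?_
    have hstep' : κ * (((k : ℝ) + 1 + 1) ^ p - ((k : ℝ) + 1) ^ p) ≤ τ (k + 1) - τ k := by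
      calc _ ≤ κ * (p * 2 ^ (p - 1) * ((k : ℝ) + 1) ^ (p - 1)) := by
            gcongr
            exact add_one_rpow_sub_rpow_le hp (by simp)
        _ = c * ((k : ℝ) + 1) ^ (p - 1) := by rw [hκ]; field_simp
        _ ≤ _ := hstep k
    push_cast
    linarith
  have hpow := rpow_sub_one_mul_sub_le (x := (m : ℝ) + 1) (y := n + 1) hp (by positivity)
    (by gcongr)
  rw [add_sub_add_right_eq_sub] at hpow
  have hκpow := mul_le_mul_of_nonneg_left hpow hκ0
  have hτ : τ m - κ * ((m : ℝ) + 1) ^ p ≤ τ n - κ * ((n : ℝ) + 1) ^ p := hmono hmn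
  linarith

theorem mul_max_rpow_mul_abs_sub_le_abs_sub {c : ℝ} {τ : ℕ → ℝ} (hp : 1 ≤ p) (hc : 0 ≤ c)
    (hstep : ∀ k : ℕ, c * ((k : ℝ) + 1) ^ (p - 1) ≤ τ (k + 1) - τ k) (m n : ℕ) :
    c / (p * 2 ^ (p - 1)) * max (((m : ℝ) + 1) ^ (p - 1)) (((n : ℝ) + 1) ^ (p - 1)) *
      |(m : ℝ) - n| ≤ |τ m - τ n| := by
  wlog hmn : m ≤ n generalizing m n
  · rw [max_comm, abs_sub_comm, abs_sub_comm (τ m)]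
    exact this n m (le_of_not_ge hmn)
  have hmn' : (m : ℝ) ≤ n := Nat.cast_le.2 hmn
  rw [max_eq_right (by gcongr), abs_sub_comm, abs_sub_comm (τ m),
    abs_of_nonneg (sub_nonneg.2 hmn')]
  exact (mul_rpow_mul_sub_le_sub hp hc hstep hmn).trans (le_abs_self _)

end PowerWeights

theorem stmt8_general (α c : ℝ) (hα : 1 ≤ α) (hc : 0 < c) :
    ∃ C : ℝ, 0 < C ∧
      ∀ t : ℕ → ℝ, (∀ k : ℕ, 1 ≤ k → t (k + 1) - t k ≥ c * (k : ℝ) ^ (α - 1)) →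
        ∀ b : ℕ → ℂ, Summable (fun m => ‖b m‖ ^ 2) →
          ∑' n : ℕ, ‖∑' m : {m : ℕ // m ≠ n},
              (((((m : ℕ) : ℝ) + 1) ^ (α - 1) : ℝ) : ℂ) * b m
                / ((t ((m : ℕ) + 1) : ℂ) - (t (n + 1) : ℂ))‖ ^ 2
            ≤ C * ∑' m : ℕ, ‖b m‖ ^ 2 := by
  set w : ℕ → ℝ := fun m => ((m : ℝ) + 1) ^ (α - 1)
  set κ := c / (α * 2 ^ (α - 1))
  set B := max 1 (α - 1)
  have hκ : 0 < κ := by positivity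
  have hB : 0 < B := one_pos.trans_le (le_max_left _ _)
  refine ⟨(√((2 / κ) ^ 2 * ∑' k : ℤ, 1 / (k : ℝ) ^ 2) + B / κ * 4) ^ 2, by positivity,
    fun t hgap b hb => ?_⟩
  set τ : ℕ → ℝ := fun n => t (n + 1)
  have hreg (m n : ℕ) :
      |w m - w n| ≤ B * max (w m) (w n) * (|(m : ℝ) - n| / (max (m : ℝ) n + 1)) := by
    simpa only [add_sub_add_right_eq_sub, max_add_add_right] using
      abs_rpow_sub_rpow_le (sub_nonneg.2 hα) m.cast_add_one_pos n.cast_add_one_pos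
  have hdist := mul_max_rpow_mul_abs_sub_le_abs_sub (τ := τ) hα hc.le fun k => by
    simpa using hgap (k + 1) k.succ_pos
  have hrow (n : ℕ) : ∑' m : {m : ℕ // m ≠ n}, (w m : ℂ) * b m / ((τ m : ℂ) - (τ n : ℂ)) =
      ∑' m, discreteHilbert w τ n m * b m := by
    rw [← tsum_subtype_eq_of_support_subset (s := {m | m ≠ n}) fun m hm h => hm (by
      simp [discreteHilbert, h])]
    refine tsum_congr fun m => ?_
    simp [discreteHilbert, div_mul_eq_mul_div]
  have hnorm := l2_opNorm_submatrix_discreteHilbert_le hκ hB.le (fun m => by positivity) hdist hreg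
  exact (tsum_congr fun n => congrArg (‖·‖ ^ 2) (hrow n)).trans_le
    (tsum_norm_sq_le_of_submatrix_norm_le hnorm hb)

/-- STATEMENT 7: weighted discrete Hilbert transform bound, `α > 1`.
If `t` is strictly increasing with `t_{k+1} - t_k ≥ c k^{α-1}` for `k ≥ 1`, then there is
`C̃ > 0` (depending only on α and c) with
`Σ_n |Σ_{m≠n} m^{α-1} b_m/(t_m - t_n)|² ≤ C̃ Σ_m |b_m|²` for every `b ∈ ℓ²`.
(Sequences are indexed by positive integers; here index `k : ℕ` stands for `k+1`.) -/
theorem stmt8 (α c : ℝ) (hα : 1 < α) (hc : 0 < c) :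
    ∃ C : ℝ, 0 < C ∧
      ∀ t : ℕ → ℝ, StrictMono t →
        (∀ k : ℕ, 1 ≤ k → t (k + 1) - t k ≥ c * (k : ℝ) ^ (α - 1)) →
        ∀ b : ℕ → ℂ, Summable (fun m => ‖b m‖ ^ 2) →
          ∑' n : ℕ, ‖∑' m : {m : ℕ // m ≠ n},
              (((((m : ℕ) : ℝ) + 1) ^ (α - 1) : ℝ) : ℂ) * b m
                / ((t ((m : ℕ) + 1) : ℂ) - (t (n + 1) : ℂ))‖ ^ 2
            ≤ C * ∑' m : ℕ, ‖b m‖ ^ 2 := by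
  obtain ⟨C, hC, h⟩ := stmt8_general α c hα.le hc
  exact ⟨C, hC, fun t _ => h t⟩
end
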